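/- Let n ≥ 3 and let Ω ⊂ ℝⁿ be a smooth bounded strictly convex domain. Suppose u ∈ C^∞(ℝⁿ∖Ω) solves Δu = 0 in ℝⁿ∖Ω̄, u = 1 on ∂Ω, u(x) → 0 as |x| → ∞, and that Du(x) ≠ 0 for all x ∈ ℝⁿ∖Ω. For x ∈ ℝⁿ∖Ω̄ let K(x) denote the Gaussian curvature of the level set {y : u(y) = u(x)} through x, given by the formula K(x) = (−1)^{n−1} |Du(x)|^{−(n+1)} Σ_{α,β=1}^{n} cof(D²u(x))_{αβ} u_α(x) u_β(x), where cof(D²u)_{αβ} = ∂det(D²u)/∂u_{αβ} denotes the cofactor matrix of the Hessian. Then, as |x| → ∞, K(x) = |x|^{1−n} + O(|x|^{−n}). -/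

import Mathlib

open scoped Classical Topology
open Real Filter MeasureTheory

noncomputable section

/-- Euclidean space ℝⁿ. -/
abbrev Euc (n : ℕ) : Type := EuclideanSpace ℝ (Fin n)

/-- The standard basis vector `e i`. -/
def ebasis (n : ℕ) (i : Fin n) : Euc n := EuclideanSpace.single i 1

/-- The Hessian matrix `D²u(x)`. -/
def hessMat (n : ℕ) (u : Euc n → ℝ) (x : Euc n) : Matrix (Fin n) (Fin n) ℝ :=
  Matrix.of fun i j => iteratedFDeriv ℝ 2 u x ![ebasis n i, ebasis n j]

/-- The Laplacian `Δu(x)` (trace of the Hessian). -/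
def lapl (n : ℕ) (u : Euc n → ℝ) (x : Euc n) : ℝ := ∑ i, hessMat n u x i i

/-- The `k`-th elementary symmetric function of the eigenvalues of an `n × n` matrix,
expressed through the coefficients of the characteristic polynomial. -/
def matSk (n k : ℕ) (M : Matrix (Fin n) (Fin n) ℝ) : ℝ :=
  (-1 : ℝ) ^ k * (Matrix.charpoly M).coeff (n - k)

/-- `S_k(D²u)(x)`. -/
def SkHess (n k : ℕ) (u : Euc n → ℝ) (x : Euc n) : ℝ := matSk n k (hessMat n u x)

/-- `u` is `k`-convex on `U`: the eigenvalues of the Hessian lie in the Gårding cone `Γ_k`. -/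
def KConvexOn (n k : ℕ) (u : Euc n → ℝ) (U : Set (Euc n)) : Prop :=
  ∀ x ∈ U, ∀ j : ℕ, 1 ≤ j → j ≤ k → 0 < matSk n j (hessMat n u x)

/-- Membership in the class `𝒜_k`: symmetric positive definite with `S_k(λ(A)) = 1`. -/
def MemA (n k : ℕ) (A : Matrix (Fin n) (Fin n) ℝ) : Prop :=
  A.IsSymm ∧ A.PosDef ∧ matSk n k A = 1

/-- The quadratic form `½ xᵀ A x`. -/
def quadA (n : ℕ) (A : Matrix (Fin n) (Fin n) ℝ) (x : Euc n) : ℝ :=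
  (1 / 2) * ∑ i, ∑ j, x i * A i j * x j

/-- The linear form `b ⋅ x`. -/
def linB (n : ℕ) (b x : Euc n) : ℝ := ∑ i, b i * x i

/-- `λ_max(A) < c`, expressed through the quadratic form (for symmetric `A`). -/
def lambdaMaxLT (n : ℕ) (A : Matrix (Fin n) (Fin n) ℝ) (c : ℝ) : Prop :=
  ∀ x : Euc n, x ≠ 0 → ∑ i, ∑ j, x i * A i j * x j < c * ‖x‖ ^ 2

/-- `u` is smooth on an open neighbourhood of the (closed) set `S`;
this is our rendering of `u ∈ C^∞(S)` for a closed set `S`. -/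
def SmoothOnNhd (n : ℕ) (u : Euc n → ℝ) (S : Set (Euc n)) : Prop :=
  ∃ U : Set (Euc n), IsOpen U ∧ S ⊆ U ∧ ContDiffOn ℝ (⊤ : ℕ∞) u U

/-- A smooth bounded strictly convex domain in ℝⁿ. -/
def SmoothStrictConvexDomain (n : ℕ) (Ω : Set (Euc n)) : Prop :=
  IsOpen Ω ∧ Bornology.IsBounded Ω ∧ Ω.Nonempty ∧ Convex ℝ Ω ∧ StrictConvex ℝ Ω ∧
    ∃ f : Euc n → ℝ, ContDiff ℝ (⊤ : ℕ∞) f ∧ Ω = {x | f x < 0} ∧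
      ∀ x ∈ frontier Ω, fderiv ℝ f x ≠ 0

/-- Extension of `u` by the constant value `v` inside `Ω`. -/
def extBy (n : ℕ) (Ω : Set (Euc n)) (v : ℝ) (u : Euc n → ℝ) : Euc n → ℝ :=
  fun x => if x ∈ Ω then v else u x

/-- `u` (vanishing on `∂Ω`) is quasiconvex: all sublevel sets of its zero-extension are convex. -/
def QuasiconvexSol (n : ℕ) (Ω : Set (Euc n)) (u : Euc n → ℝ) : Prop :=
  ∀ t : ℝ, Convex ℝ {x : Euc n | extBy n Ω 0 u x ≤ t}

/-- The `k`-th elementary symmetric polynomial of a vector `a ∈ ℝⁿ`. -/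
def esymmVec (n k : ℕ) (a : Fin n → ℝ) : ℝ :=
  ∑ s ∈ Finset.powersetCard k (Finset.univ : Finset (Fin n)), ∏ i ∈ s, a i

/-- `h_k(a) = max_i S_{k-1}(a)|_{a_i = 0} · a_i`. -/
def hkfun (n k : ℕ) (a : Fin n → ℝ) : ℝ :=
  ⨆ i : Fin n, esymmVec n (k - 1) (Function.update a i 0) * a i

/-- The exponent `-k / (2 h_k(a))`. -/
def genExp (n k : ℕ) (a : Fin n → ℝ) : ℝ := -(k : ℝ) / (2 * hkfun n k a)

/-- The integrand `(1 + α t^{-k/(2h_k(a))})^{1/k}`. -/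
def genInt (n k : ℕ) (a : Fin n → ℝ) (α t : ℝ) : ℝ :=
  (1 + α * t ^ genExp n k a) ^ ((1 : ℝ) / (k : ℝ))

/-- The generalized symmetric function `ū`. -/
def ubar (n k : ℕ) (a : Fin n → ℝ) (R₀ α : ℝ) (x : Euc n) : ℝ :=
  ∫ t in R₀..(quadA n (Matrix.diagonal a) x), genInt n k a α t

/-- `μ(α) = ∫_{R₀}^∞ ((1 + α t^{-k/(2h_k(a))})^{1/k} - 1) dt - R₀`. -/
def muA (n k : ℕ) (a : Fin n → ℝ) (R₀ α : ℝ) : ℝ :=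
  (∫ t in Set.Ioi R₀, (genInt n k a α t - 1)) - R₀

/-- The ellipsoid `E_R(xb) = {x : ½ (x - xb)ᵀ A (x - xb) < R}`. -/
def ESet (n : ℕ) (A : Matrix (Fin n) (Fin n) ℝ) (xb : Euc n) (R : ℝ) : Set (Euc n) :=
  {x : Euc n | quadA n A (x - xb) < R}

/-- The non-concentric convex ring `Ω_R^ε = E_R(0) ∖ B̄_ε(x₀)`. -/
def OmegaRe (n : ℕ) (a : Fin n → ℝ) (x₀ : Euc n) (ε R : ℝ) : Set (Euc n) :=
  ESet n (Matrix.diagonal a) 0 R \ closure (Metric.ball x₀ ε)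

/-- `u` is a `k`-convex solution of the approximating problem
`S_k(D²u) = 1` in `Ω_R^ε`, `u = 0` on `∂B_ε(x₀)`, `u = ū` on `∂E_R(0)`. -/
def ApproxSol (n k : ℕ) (a : Fin n → ℝ) (x₀ : Euc n) (ε R R₀ α : ℝ)
    (u : Euc n → ℝ) : Prop :=
  SmoothOnNhd n u (closure (OmegaRe n a x₀ ε R)) ∧
  KConvexOn n k u (OmegaRe n a x₀ ε R) ∧
  (∀ x ∈ OmegaRe n a x₀ ε R, SkHess n k u x = 1) ∧
  (∀ x ∈ Metric.sphere x₀ ε, u x = 0) ∧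
  (∀ x : Euc n, quadA n (Matrix.diagonal a) x = R → u x = ubar n k a R₀ α x)

/-- The constant `C_ε` of the boundary gradient estimate. -/
def Ceps (n k : ℕ) (C ε : ℝ) : ℝ :=
  if 2 * k < n then C * ((n : ℝ) / (k : ℝ) - 2) * ε⁻¹
  else if 2 * k = n then C * ε⁻¹ * |Real.log ε|⁻¹
  else C * (2 - (n : ℝ) / (k : ℝ)) * ε ^ (1 - (n : ℝ) / (k : ℝ))

/-- `u` is a `k`-convex solution of the exterior Dirichlet problem
`S_k(D²u) = 1` in `ℝⁿ ∖ B̄_ε(x₀)`, `u = 0` on `∂B_ε(x₀)`, with quadratic asymptotics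
`½ xᵀAx + c` at infinity (`A = diag a`). -/
def ExtBallSol (n k : ℕ) (a : Fin n → ℝ) (x₀ : Euc n) (ε c : ℝ) (u : Euc n → ℝ) : Prop :=
  SmoothOnNhd n u (Metric.ball x₀ ε)ᶜ ∧
  KConvexOn n k u (closure (Metric.ball x₀ ε))ᶜ ∧
  (∀ x ∈ (closure (Metric.ball x₀ ε))ᶜ, SkHess n k u x = 1) ∧
  (∀ x ∈ Metric.sphere x₀ ε, u x = 0) ∧
  Tendsto (fun x : Euc n => u x - (quadA n (Matrix.diagonal a) x + c))
    (cocompact (Euc n)) (𝓝 0)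

/-- `u` is a `k`-convex solution of the exterior Dirichlet problem on `ℝⁿ ∖ Ω₀` with
asymptotics `½ xᵀAx + b·x + c` at infinity. -/
def ExtDomSol (n k : ℕ) (Ω₀ : Set (Euc n)) (A : Matrix (Fin n) (Fin n) ℝ) (b : Euc n)
    (c : ℝ) (u : Euc n → ℝ) : Prop :=
  SmoothOnNhd n u Ω₀ᶜ ∧
  KConvexOn n k u (closure Ω₀)ᶜ ∧
  (∀ x ∈ (closure Ω₀)ᶜ, SkHess n k u x = 1) ∧
  (∀ x ∈ frontier Ω₀, u x = 0) ∧
  Tendsto (fun x : Euc n => u x - (quadA n A x + linB n b x + c))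
    (cocompact (Euc n)) (𝓝 0)

/-- `u` is a solution of the exterior Dirichlet problem for the Laplace equation
`Δu = 1` on `ℝⁿ ∖ Ω₀` with asymptotics `½ xᵀAx + b·x + c` at infinity. -/
def ExtDomSolLap (n : ℕ) (Ω₀ : Set (Euc n)) (A : Matrix (Fin n) (Fin n) ℝ) (b : Euc n)
    (c : ℝ) (u : Euc n → ℝ) : Prop :=
  SmoothOnNhd n u Ω₀ᶜ ∧
  (∀ x ∈ (closure Ω₀)ᶜ, lapl n u x = 1) ∧
  (∀ x ∈ frontier Ω₀, u x = 0) ∧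
  Tendsto (fun x : Euc n => u x - (quadA n A x + linB n b x + c))
    (cocompact (Euc n)) (𝓝 0)

/-- `u` solves the exterior problem `Δu = 0` in `ℝⁿ ∖ Ω̄`, `u = 1` on `∂Ω`,
`u → 0` at infinity. -/
def HarmExtSol (n : ℕ) (Ω : Set (Euc n)) (u : Euc n → ℝ) : Prop :=
  SmoothOnNhd n u Ωᶜ ∧
  (∀ x ∈ (closure Ω)ᶜ, lapl n u x = 0) ∧
  (∀ x ∈ frontier Ω, u x = 1) ∧
  Tendsto u (cocompact (Euc n)) (𝓝 0)

end

/-- The Gaussian curvature of the level set of `u` through `x`: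
`K = (-1)^{n-1} |Du|^{-(n+1)} Σ_{α,β} cof(D²u)_{αβ} u_α u_β`
(for the symmetric Hessian, the cofactor matrix is the adjugate). -/
noncomputable def gaussK (n : ℕ) (u : Euc n → ℝ) (x : Euc n) : ℝ :=
  (-1 : ℝ) ^ (n - 1) * ‖fderiv ℝ u x‖ ^ (-((n : ℝ) + 1)) *
    ∑ α : Fin n, ∑ β : Fin n,
      (hessMat n u x).adjugate α β * fderiv ℝ u x (ebasis n α) * fderiv ℝ u x (ebasis n β)

/-!
The first two derivatives of a harmonic function `u` vanishing at infinity in dimension `d ≥ 3` are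
those of a multiple `c |x| ^ (2 - d)` of the Newtonian kernel, up to a relative error `O(|x|⁻¹)`.
Indeed, after a cutoff, `u` is the convolution of a compactly supported function `f` with the kernel
(Liouville), and for a kernel `G` homogeneous of degree `m` the convolution `f ⋆ G` differs from
`(∫ f) G` by `O(|x| ^ (m - 1))`; this applies to `G` and its derivatives. The maximum principle,
with a small multiple of the kernel centred inside `Ω` as barrier, gives `c > 0`.

The curvature is a smooth function of `(Du, D²u)` where `Du ≠ 0`, and it only gets multiplied by
`(t / s) ^ (d - 1)` under the scaling `(s Du, t D²u)`. Rescaling the derivatives at `x` to those on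
the unit sphere, where the level sets of the kernel have curvature `1`, the relative error
`O(|x|⁻¹)` carries over to `K`.
-/

section

open InnerProductSpace Laplacian Module Asymptotics Bornology
open scoped Convolution

-- Required by the instances on `E →L[ℝ] E →L[ℝ] F`.
set_option maxSynthPendingDepth 2

section MinimumPrinciple

lemma isCompact_inter_setOf_le {X : Type*} [TopologicalSpace X] {F : Set X}
    (hF : IsClosed F) {h : X → ℝ} (hc : ContinuousOn h F)
    (h0 : Tendsto h (cocompact X) (𝓝 0)) {a : ℝ} (ha : a < 0) : IsCompact (F ∩ {x | h x ≤ a}) := by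
  obtain ⟨K, hK, hKa⟩ := mem_cocompact.1 (h0.eventually (lt_mem_nhds ha))
  refine hK.of_isClosed_subset (hc.preimage_isClosed_of_isClosed hF isClosed_Iic) fun x hx ↦ ?_
  by_contra hxK
  exact not_le.2 (show a < h x from hKa hxK) hx.2

variable {E : Type*} [NormedAddCommGroup E]

section SecondDerivativeTest

variable [NormedSpace ℝ E] {h : E → ℝ} {x : E}

lemma eventually_deriv_comp_add_smul (hh : ContDiffAt ℝ 2 h x) (a : E) :
    deriv (fun t : ℝ ↦ h (x + t • a)) =ᶠ[𝓝 0] fun t ↦ fderiv ℝ h (x + t • a) a := by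
  have hline : ContinuousAt (fun t : ℝ ↦ x + t • a) 0 := by fun_prop
  have hdiff : ∀ᶠ y in 𝓝 (x + (0 : ℝ) • a), DifferentiableAt ℝ h y := by
    rw [zero_smul, add_zero]
    exact (hh.eventually (by simp)).mono fun y hy ↦ hy.differentiableAt two_ne_zero
  filter_upwards [hline.eventually hdiff] with t ht
  have hderiv : HasDerivAt (fun t : ℝ ↦ x + t • a) a t := by
    simpa using ((hasDerivAt_id t).smul_const a).const_add x
  exact (ht.hasFDerivAt.comp_hasDerivAt t hderiv).deriv

lemma deriv_deriv_comp_add_smul (hh : ContDiffAt ℝ 2 h x) (a : E) :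
    deriv (deriv fun t : ℝ ↦ h (x + t • a)) 0 = fderiv ℝ (fderiv ℝ h) x a a := by
  have hdiff : DifferentiableAt ℝ (fderiv ℝ h) (x + (0 : ℝ) • a) := by
    simpa using (hh.fderiv_right (m := 1) (by norm_num)).differentiableAt one_ne_zero
  have hline : HasDerivAt (fun t : ℝ ↦ x + t • a) a 0 := by
    simpa using ((hasDerivAt_id (0 : ℝ)).smul_const a).const_add x
  have hcomp : HasDerivAt (fun t : ℝ ↦ fderiv ℝ h (x + t • a))
      (fderiv ℝ (fderiv ℝ h) (x + (0 : ℝ) • a) a) 0 :=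
    hdiff.hasFDerivAt.comp_hasDerivAt 0 hline
  rw [(eventually_deriv_comp_add_smul hh a).deriv_eq]
  simpa using (hcomp.clm_apply (hasDerivAt_const (0 : ℝ) a)).deriv

lemma fderiv_fderiv_nonneg_of_isLocalMin (hh : ContDiffAt ℝ 2 h x) (hmin : IsLocalMin h x)
    (a : E) : 0 ≤ fderiv ℝ (fderiv ℝ h) x a a := by
  by_contra! hneg
  set g : ℝ → ℝ := fun t ↦ h (x + t • a)
  have hline : Tendsto (fun t : ℝ ↦ x + t • a) (𝓝 0) (𝓝 x) := by
    simpa using (show ContinuousAt (fun t : ℝ ↦ x + t • a) 0 by fun_prop).tendsto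
  have hg : deriv (deriv g) 0 = fderiv ℝ (fderiv ℝ h) x a a := deriv_deriv_comp_add_smul hh a
  have hg' : deriv g 0 = 0 := by
    simpa [hmin.fderiv_eq_zero] using (eventually_deriv_comp_add_smul hh a).self_of_nhds
  have hgc : ContinuousAt g 0 := ContinuousAt.comp (by simpa using hh.continuousAt) (by fun_prop)
  have hmax : IsLocalMax g 0 := isLocalMax_of_deriv_deriv_neg (hg ▸ hneg) hg' hgc
  have hconst : g =ᶠ[𝓝 0] fun _ ↦ h x := by
    filter_upwards [hline.eventually hmin, hmax] with t ht ht'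
    exact le_antisymm (by simpa [g] using ht') ht
  have hzero : deriv (deriv g) 0 = 0 := by simp [hconst.deriv.deriv_eq]
  linarith

end SecondDerivativeTest

variable [InnerProductSpace ℝ E] [FiniteDimensional ℝ E]

/-- The trace of a bilinear form on `E`, as a continuous linear functional. The Laplacian is the
trace of the second derivative (`laplacian_eq_traceForm`). -/
noncomputable def traceForm (E : Type*) [NormedAddCommGroup E] [InnerProductSpace ℝ E]
    [FiniteDimensional ℝ E] : (E →L[ℝ] E →L[ℝ] ℝ) →L[ℝ] ℝ :=
  ∑ i, (ContinuousLinearMap.apply ℝ ℝ (stdOrthonormalBasis ℝ E i)).comp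
    (ContinuousLinearMap.apply ℝ (E →L[ℝ] ℝ) (stdOrthonormalBasis ℝ E i))

lemma traceForm_apply (B : E →L[ℝ] E →L[ℝ] ℝ) :
    traceForm E B = ∑ i, B (stdOrthonormalBasis ℝ E i) (stdOrthonormalBasis ℝ E i) := by
  simp [traceForm]

lemma traceForm_innerSL : traceForm E (innerSL ℝ) = finrank ℝ E := by
  rw [traceForm_apply]
  have hone (i) : innerSL ℝ (stdOrthonormalBasis ℝ E i) (stdOrthonormalBasis ℝ E i) = 1 := by
    simp
  simp [hone]

lemma laplacian_eq_traceForm (f : E → ℝ) (x : E) :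
    Δ f x = traceForm E (fderiv ℝ (fderiv ℝ f) x) := by
  simp [laplacian_eq_iteratedFDeriv_stdOrthonormalBasis, traceForm_apply,
    iteratedFDeriv_two_apply]

lemma contDiff_laplacian {k : WithTop ℕ∞} {f : E → ℝ} (hf : ContDiff ℝ (k + 2) f) :
    ContDiff ℝ k (Δ f) := by
  have hf' : ContDiff ℝ (k + 1) (fderiv ℝ f) := hf.fderiv_right (by rw [add_assoc]; norm_num)
  rw [funext (laplacian_eq_traceForm f)]
  exact (traceForm E).contDiff.comp (hf'.fderiv_right le_rfl)

lemma hasCompactSupport_laplacian {f : E → ℝ} (hf : HasCompactSupport f) :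
    HasCompactSupport (Δ f) := by
  rw [funext (laplacian_eq_traceForm f)]
  exact ((hf.fderiv ℝ).fderiv ℝ).comp_left (map_zero (traceForm E))

lemma laplacian_nonneg_of_isLocalMin {h : E → ℝ} {x : E} (hh : ContDiffAt ℝ 2 h x)
    (hmin : IsLocalMin h x) : 0 ≤ Δ h x := by
  rw [laplacian_eq_traceForm, traceForm_apply]
  exact Finset.sum_nonneg fun i _ ↦ fderiv_fderiv_nonneg_of_isLocalMin hh hmin _

lemma laplacian_norm_sq (x : E) : Δ (fun z : E ↦ ‖z‖ ^ 2) x = 2 * finrank ℝ E := by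
  rw [laplacian_eq_traceForm, fderiv_norm_sq]
  have : fderiv ℝ (2 • ⇑(innerSL ℝ (E := E))) x = 2 • (innerSL ℝ : E →L[ℝ] E →L[ℝ] ℝ) :=
    (2 • (innerSL ℝ : E →L[ℝ] E →L[ℝ] ℝ)).hasFDerivAt.fderiv
  rw [this, map_nsmul, traceForm_innerSL, nsmul_eq_mul, Nat.cast_ofNat]

lemma not_isLocalMin_sub_mul_norm_sq [Nontrivial E] {h : E → ℝ} {x : E} (hh : ContDiffAt ℝ 2 h x)
    (hΔ : Δ h x ≤ 0) {δ : ℝ} (hδ : 0 < δ) : ¬ IsLocalMin (h - δ • fun y ↦ ‖y‖ ^ 2) x := by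
  intro hmin
  have hsq : ContDiffAt ℝ 2 (fun y : E ↦ ‖y‖ ^ 2) x := (contDiff_norm_sq ℝ).contDiffAt
  have hsq' : ContDiffAt ℝ 2 (δ • fun y : E ↦ ‖y‖ ^ 2) x := contDiffAt_const.smul hsq
  have hnonneg := laplacian_nonneg_of_isLocalMin (h := h - δ • fun y ↦ ‖y‖ ^ 2)
    (hh.sub hsq') hmin
  rw [hh.laplacian_sub hsq', laplacian_smul δ hsq, laplacian_norm_sq, smul_eq_mul] at hnonneg
  have hd : (0 : ℝ) < finrank ℝ E := by exact_mod_cast finrank_pos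
  have : 0 < δ * (2 * finrank ℝ E) := by positivity
  linarith

/-- A negative infimum would be attained on a compact set, and perturbing `h` by `-δ ‖x‖ ^ 2` makes
its Laplacian strictly negative there. -/
theorem nonneg_of_laplacian_nonpos [Nontrivial E] {F : Set E} (hF : IsClosed F) {h : E → ℝ}
    (hc : ContinuousOn h F) (h0 : Tendsto h (cocompact E) (𝓝 0))
    (H : ∀ x ∈ F, h x < 0 → F ∈ 𝓝 x ∧ ContDiffAt ℝ 2 h x ∧ Δ h x ≤ 0) {x : E} (hx : x ∈ F) :
    0 ≤ h x := by
  by_contra! hneg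
  have hK := isCompact_inter_setOf_le hF hc h0 (div_neg_of_neg_of_pos hneg two_pos)
  set K := F ∩ {y | h y ≤ h x / 2}
  have hxK : x ∈ K := ⟨hx, show h x ≤ h x / 2 by linarith⟩
  obtain ⟨R, hR⟩ : ∃ R, ∀ y ∈ K, ‖y‖ ^ 2 + 1 ≤ R := by
    obtain ⟨R, hR⟩ := hK.exists_bound_of_continuousOn (f := fun y ↦ ‖y‖ ^ 2 + 1) (by fun_prop)
    exact ⟨R, fun y hy ↦ (le_abs_self _).trans (hR y hy)⟩
  have hR0 : 0 < R := by linarith [hR x hxK, sq_nonneg ‖x‖]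
  set δ := -h x / (2 * R)
  have hδ : 0 < δ := by have := neg_pos.2 hneg; positivity
  have hδR : δ * R = -h x / 2 := by simp only [δ]; field_simp
  set g : E → ℝ := h - δ • fun y ↦ ‖y‖ ^ 2
  obtain ⟨y, hyK, hymin⟩ := hK.exists_isMinOn (f := g) ⟨x, hxK⟩
    ((hc.mono Set.inter_subset_left).sub (by fun_prop))
  have hyx : h y < h x / 2 := by
    have hgle : h y - δ * ‖y‖ ^ 2 ≤ h x - δ * ‖x‖ ^ 2 := hymin hxK
    have hδy := mul_le_mul_of_nonneg_left (hR y hyK) hδ.le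
    have hδx : 0 ≤ δ * ‖x‖ ^ 2 := by positivity
    linarith
  obtain ⟨hFy, hsmooth, hΔ⟩ := H y hyK.1 (by linarith)
  refine not_isLocalMin_sub_mul_norm_sq hsmooth hΔ hδ ?_
  filter_upwards [hFy, hsmooth.continuousAt.eventually (gt_mem_nhds hyx)] with z hzF hz
  exact hymin ⟨hzF, hz.le⟩

theorem eq_zero_of_laplacian_eq_zero [Nontrivial E] {h : E → ℝ} (hh : ContDiff ℝ 2 h)
    (hΔ : ∀ x, Δ h x = 0) (h0 : Tendsto h (cocompact E) (𝓝 0)) : h = 0 := by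
  funext x
  refine le_antisymm ?_ ?_
  · have hneg : 0 ≤ (-h) x := nonneg_of_laplacian_nonpos isClosed_univ
      hh.continuous.neg.continuousOn (neg_zero (G := ℝ) ▸ h0.neg)
      (fun x _ _ ↦ ⟨univ_mem, hh.neg.contDiffAt, by simp [laplacian_neg, hΔ]⟩) (Set.mem_univ x)
    simpa using hneg
  · exact nonneg_of_laplacian_nonpos isClosed_univ hh.continuous.continuousOn h0
      (fun x _ _ ↦ ⟨univ_mem, hh.contDiffAt, (hΔ x).le⟩) (Set.mem_univ x)

end MinimumPrinciple

section NewtonKernel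

variable {E : Type*} [NormedAddCommGroup E] {q s : ℝ} {z : E}

/-- The radial function `z ↦ (|z|² + s) ^ q`: a power of the norm for `s = 0`, and a smooth
regularisation of it for `s > 0`. -/
noncomputable def radialPow (q s : ℝ) (z : E) : ℝ := (‖z‖ ^ 2 + s) ^ q

lemma radialPow_pos (hz : 0 < ‖z‖ ^ 2 + s) : 0 < radialPow q s z := rpow_pos_of_pos hz _

lemma radialPow_zero_eq_norm_rpow : radialPow q 0 z = ‖z‖ ^ (2 * q) := by
  rw [radialPow, add_zero, rpow_mul (norm_nonneg z), rpow_two]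

lemma radialPow_sub_one (hz : 0 < ‖z‖ ^ 2 + s) :
    radialPow q s z = radialPow (q - 1) s z * (‖z‖ ^ 2 + s) := by
  rw [radialPow, radialPow, ← rpow_add_one hz.ne', sub_add_cancel]

variable [InnerProductSpace ℝ E]

lemma contDiffAt_radialPow (hz : 0 < ‖z‖ ^ 2 + s) {k : WithTop ℕ∞} :
    ContDiffAt ℝ k (radialPow q s) z :=
  ((contDiff_norm_sq ℝ).contDiffAt.add contDiffAt_const).rpow_const_of_ne hz.ne'

lemma contDiff_radialPow (hs : 0 < s) {k : WithTop ℕ∞} : ContDiff ℝ k (radialPow q s : E → ℝ) :=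
  contDiff_iff_contDiffAt.2 fun _ ↦ contDiffAt_radialPow (by positivity)

lemma hasFDerivAt_radialPow (hz : 0 < ‖z‖ ^ 2 + s) :
    HasFDerivAt (radialPow q s) ((2 * q * radialPow (q - 1) s z) • innerSL ℝ z) z := by
  have hsq : HasFDerivAt (fun z : E ↦ ‖z‖ ^ 2 + s) (2 • innerSL ℝ z) z :=
    (hasStrictFDerivAt_norm_sq z).hasFDerivAt.add_const s
  refine (hsq.rpow_const (p := q) (Or.inl hz.ne')).congr_fderiv ?_
  rw [← Nat.cast_smul_eq_nsmul ℝ, smul_smul, Nat.cast_ofNat, radialPow]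
  ring_nf

lemma fderiv_fderiv_radialPow_apply (hz : 0 < ‖z‖ ^ 2 + s) (a b : E) :
    fderiv ℝ (fderiv ℝ (radialPow q s)) z a b = 2 * q * radialPow (q - 1) s z * inner ℝ a b +
      4 * q * (q - 1) * radialPow (q - 2) s z * inner ℝ z a * inner ℝ z b := by
  have hpos : ∀ᶠ y : E in 𝓝 z, 0 < ‖y‖ ^ 2 + s :=
    (show ContinuousAt (fun y : E ↦ ‖y‖ ^ 2 + s) z by fun_prop).eventually (lt_mem_nhds hz)
  have hfderiv : fderiv ℝ (radialPow q s) =ᶠ[𝓝 z]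
      fun y ↦ (2 * q * radialPow (q - 1) s y) • innerSL ℝ y :=
    hpos.mono fun y hy ↦ (hasFDerivAt_radialPow hy).fderiv
  have hinner : HasFDerivAt (fun y : E ↦ innerSL ℝ y) (innerSL ℝ : E →L[ℝ] _) z :=
    (innerSL ℝ : E →L[ℝ] _).hasFDerivAt
  have hmul := ((hasFDerivAt_radialPow (q := q - 1) hz).const_mul (2 * q)).fun_smul hinner
  rw [hfderiv.fderiv_eq, hmul.fderiv, show q - 1 - 1 = q - 2 by ring]
  simp only [add_apply, smul_apply, ContinuousLinearMap.smulRight_apply, innerSL_apply_apply,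
    smul_eq_mul]
  rw [show innerSL ℝ a b = inner ℝ a b from innerSL_apply_apply ℝ a b]
  ring

variable (E) in
/-- The Newtonian kernel `z ↦ |z| ^ (2 - d)` of the `d`-dimensional space `E`, up to normalisation,
for `s = 0`; for `s > 0`, its smooth regularisation `z ↦ (|z|² + s) ^ ((2 - d) / 2)`. -/
noncomputable def newtonKernel (s : ℝ) : E → ℝ := radialPow ((2 - finrank ℝ E) / 2) s

variable (E) in
/-- The density `z ↦ s (|z|² + s) ^ (-(d + 2) / 2)` of which the regularised Newtonian kernel is, up
to a constant, the potential (`laplacian_newtonKernel`). -/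
noncomputable def newtonDensity (s : ℝ) (z : E) : ℝ := s * radialPow (-(finrank ℝ E + 2) / 2) s z

lemma contDiffAt_newtonKernel (hz : z ≠ 0) {k : WithTop ℕ∞} :
    ContDiffAt ℝ k (newtonKernel E 0) z :=
  contDiffAt_radialPow (by positivity)

lemma newtonKernel_zero_apply (z : E) : newtonKernel E 0 z = ‖z‖ ^ (2 - finrank ℝ E : ℝ) := by
  rw [newtonKernel, radialPow_zero_eq_norm_rpow, mul_div_cancel₀ _ two_ne_zero]

lemma newtonDensity_smul {ε : ℝ} (hε : 0 < ε) (z : E) :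
    newtonDensity E (ε ^ 2) (ε • z) = (ε ^ finrank ℝ E)⁻¹ * newtonDensity E 1 z := by
  have hexp : ε ^ 2 * (ε ^ 2) ^ (-(finrank ℝ E + 2) / 2 : ℝ) = (ε ^ finrank ℝ E)⁻¹ := by
    rw [← rpow_natCast ε (finrank ℝ E), ← rpow_neg hε.le, ← rpow_natCast ε 2, ← rpow_mul hε.le,
      ← rpow_add hε]
    push_cast
    ring_nf
  rw [newtonDensity, newtonDensity, radialPow, radialPow, norm_smul, mul_pow, norm_eq_abs, sq_abs,
    ← mul_add_one, mul_rpow (by positivity) (by positivity), ← mul_assoc, hexp, one_mul]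

variable [FiniteDimensional ℝ E]

lemma laplacian_radialPow (hz : 0 < ‖z‖ ^ 2 + s) :
    Δ (radialPow q s : E → ℝ) z = 2 * q * radialPow (q - 1) s z * finrank ℝ E +
      4 * q * (q - 1) * radialPow (q - 2) s z * ‖z‖ ^ 2 := by
  simp only [laplacian_eq_traceForm, traceForm_apply, fderiv_fderiv_radialPow_apply hz,
    Finset.sum_add_distrib, mul_assoc, ← Finset.mul_sum]
  simp [← sq, (stdOrthonormalBasis ℝ E).sum_sq_inner_left]

lemma laplacian_newtonKernel (hz : 0 < ‖z‖ ^ 2 + s) :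
    Δ (newtonKernel E s) z =
      -(finrank ℝ E * (finrank ℝ E - 2)) * newtonDensity E s z := by
  rw [newtonKernel, newtonDensity, laplacian_radialPow hz, radialPow_sub_one hz,
    show (2 - (finrank ℝ E : ℝ)) / 2 - 2 = -(finrank ℝ E + 2) / 2 by ring,
    show (2 - (finrank ℝ E : ℝ)) / 2 - 1 - 1 = -(finrank ℝ E + 2) / 2 by ring]
  ring

lemma laplacian_newtonKernel_zero (hz : z ≠ 0) : Δ (newtonKernel E 0) z = 0 := by
  rw [laplacian_newtonKernel (by positivity), newtonDensity, zero_mul, mul_zero]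

lemma tendsto_newtonKernel_cocompact (hd : 2 < finrank ℝ E) :
    Tendsto (newtonKernel E 0) (cocompact E) (𝓝 0) := by
  have hd' : (0 : ℝ) < finrank ℝ E - 2 := sub_pos.2 (by exact_mod_cast hd)
  have hnorm : Tendsto (fun z : E ↦ ‖z‖) (cocompact E) atTop := tendsto_norm_cocompact_atTop
  refine ((tendsto_rpow_neg_atTop hd').comp hnorm).congr fun z ↦ ?_
  rw [Function.comp_apply, newtonKernel_zero_apply, neg_sub]

variable [MeasurableSpace E] [BorelSpace E]

lemma locallyIntegrable_newtonKernel [Nontrivial E] :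
    LocallyIntegrable (newtonKernel E 0) := by
  refine locallyIntegrable_of_norm_le_rpow (C := 1) (α := finrank ℝ E - 2) finrank_pos (by linarith)
    (ae_of_all _ fun z ↦ ?_) ?_
  · rw [newtonKernel_zero_apply, Real.norm_of_nonneg (by positivity), neg_sub, one_mul]
  · unfold newtonKernel radialPow
    exact Measurable.aestronglyMeasurable (by fun_prop)

lemma integrable_newtonDensity : Integrable (newtonDensity E 1) := by
  have hint : Integrable fun z : E ↦ (1 + ‖z‖ ^ 2) ^ (-((finrank ℝ E : ℝ) + 2) / 2) :=
    integrable_rpow_neg_one_add_norm_sq (by simp)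
  refine hint.congr (ae_of_all _ fun z ↦ ?_)
  simp only [newtonDensity, one_mul, radialPow, add_comm (1 : ℝ)]

lemma integral_newtonDensity_pos : 0 < ∫ z, newtonDensity E 1 z := by
  have hpos (z : E) : 0 < newtonDensity E 1 z := mul_pos one_pos (radialPow_pos (by positivity))
  rw [integral_pos_iff_support_of_nonneg (fun z ↦ (hpos z).le) integrable_newtonDensity,
    Set.eq_univ_of_forall fun z ↦ Function.mem_support.2 (hpos z).ne']
  exact isOpen_univ.measure_pos volume Set.univ_nonempty

end NewtonKernel

section Convolution

lemma eventually_forall_sub_mem {E : Type*} [NormedAddCommGroup E] {K U : Set E} (hK : IsCompact K)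
    (hU : IsOpen U) {x : E} (hx : ∀ y ∈ K, x - y ∈ U) :
    ∀ᶠ z in 𝓝 x, ∀ y ∈ K, z - y ∈ U :=
  hK.eventually_forall_of_forall_eventually fun y hy ↦
    continuous_sub.continuousAt.eventually (hU.mem_nhds (hx y hy))

section NormedSpace

variable {E F : Type*} [NormedAddCommGroup E] [NormedSpace ℝ E] [FiniteDimensional ℝ E]
  [NormedAddCommGroup F] [NormedSpace ℝ F]

lemma exists_contDiff_hasCompactSupport_eqOn_nhdsSet {n : ℕ∞} {K U : Set E} (hK : IsCompact K)
    (hU : IsOpen U) (hKU : K ⊆ U) {g : E → F} (hg : ContDiffOn ℝ n g U) :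
    ∃ φ : E → F, ContDiff ℝ n φ ∧ HasCompactSupport φ ∧ φ =ᶠ[𝓝ˢ K] g := by
  obtain ⟨L, hL, hKL, hLU⟩ := exists_compact_between hK hU hKU
  obtain ⟨χ, hχK, hχL, -⟩ := exists_contMDiffMap_one_nhds_of_subset_interior
    (modelWithCornersSelf ℝ E) (n := n) hK.isClosed hKL
  refine ⟨fun x ↦ χ x • g x, contDiff_iff_contDiffAt.2 fun x ↦ ?_,
    HasCompactSupport.intro hL fun x hx ↦ by rw [hχL x hx, zero_smul], ?_⟩
  · by_cases hx : x ∈ U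
    · exact χ.contMDiff.contDiff.contDiffAt.smul (hg.contDiffAt (hU.mem_nhds hx))
    · have hzero : (fun x ↦ χ x • g x) =ᶠ[𝓝 x] fun _ ↦ 0 := by
        filter_upwards [hL.isClosed.isOpen_compl.mem_nhds fun h ↦ hx (hLU h)] with y hy
        rw [hχL y hy, zero_smul]
      exact contDiffAt_const.congr_of_eventuallyEq hzero
  · filter_upwards [hχK] with x hx
    rw [hx, one_smul]

end NormedSpace

variable {E F G : Type*} [NormedAddCommGroup E] [InnerProductSpace ℝ E] [FiniteDimensional ℝ E]
  [MeasurableSpace E] [BorelSpace E] [NormedAddCommGroup F] [NormedSpace ℝ F]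
  [NormedAddCommGroup G] [NormedSpace ℝ G]

omit [FiniteDimensional ℝ E] [MeasurableSpace E] [BorelSpace E] in
lemma precompR_lsmul : (ContinuousLinearMap.lsmul ℝ ℝ : ℝ →L[ℝ] F →L[ℝ] F).precompR E =
    ContinuousLinearMap.lsmul ℝ ℝ := by
  ext
  simp

lemma convolution_comm (f g : E → ℝ) : f ⋆ g = g ⋆ f := by
  have hflip : (ContinuousLinearMap.lsmul ℝ ℝ : ℝ →L[ℝ] ℝ →L[ℝ] ℝ).flip =
      ContinuousLinearMap.lsmul ℝ ℝ := by
    ext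
    simp
  rw [← convolution_flip, hflip]

lemma convolution_congr_of_forall_sub {k : E → ℝ} {g φ : E → F} {x : E}
    (h : ∀ y ∈ tsupport k, g (x - y) = φ (x - y)) : (k ⋆ g) x = (k ⋆ φ) x := by
  refine integral_congr_ae (ae_of_all _ fun y ↦ ?_)
  by_cases hy : y ∈ tsupport k
  · simp only [h y hy]
  · simp [image_eq_zero_of_notMem_tsupport hy]

lemma map_convolution [CompleteSpace F] [CompleteSpace G] (L : F →L[ℝ] G) {k : E → ℝ}
    {g : E → F} {x : E} (h : ConvolutionExistsAt k g x (ContinuousLinearMap.lsmul ℝ ℝ)) :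
    L ((k ⋆ g) x) = (k ⋆ fun y ↦ L (g y)) x := by
  refine (L.integral_comp_comm h).symm.trans (integral_congr_ae (ae_of_all _ fun y ↦ ?_))
  exact L.map_smul (k y) (g (x - y))

lemma fderiv_convolution_right {k : E → ℝ} (hk : LocallyIntegrable k) {g : E → F}
    (hg : ContDiff ℝ 1 g) (hgc : HasCompactSupport g) :
    fderiv ℝ (k ⋆ g) = k ⋆ fderiv ℝ g := by
  funext x
  rw [(hgc.hasFDerivAt_convolution_right _ hk hg x).fderiv, precompR_lsmul]

lemma hasFDerivAt_convolution_left {k : E → ℝ} (hk : LocallyIntegrable k)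
    (hkc : HasCompactSupport k) {U : Set E} (hU : IsOpen U) {g : E → F}
    (hg : ContDiffOn ℝ 1 g U) {x : E} (hx : ∀ y ∈ tsupport k, x - y ∈ U) :
    HasFDerivAt (k ⋆ g) ((k ⋆ fderiv ℝ g) x) x := by
  have hK : IsCompact ((fun y ↦ x - y) '' tsupport k) := hkc.image (by fun_prop)
  obtain ⟨φ, hφ, hφc, hφg⟩ := exists_contDiff_hasCompactSupport_eqOn_nhdsSet hK hU
    (Set.image_subset_iff.2 hx) hg
  obtain ⟨V, hV, hKV, hVg⟩ := eventually_nhdsSet_iff_exists.1 hφg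
  have hsub : ∀ y ∈ tsupport k, x - y ∈ V := fun y hy ↦ hKV ⟨y, hy, rfl⟩
  have hconv : k ⋆ g =ᶠ[𝓝 x] k ⋆ φ := by
    filter_upwards [eventually_forall_sub_mem hkc hV hsub] with z hz
    exact convolution_congr_of_forall_sub fun y hy ↦ (hVg _ (hz y hy)).symm
  have hfderiv : (k ⋆ fderiv ℝ g) x = (k ⋆ fderiv ℝ φ) x :=
    convolution_congr_of_forall_sub fun y hy ↦
      (Filter.eventuallyEq_of_mem (hV.mem_nhds (hsub y hy)) hVg).fderiv_eq.symm
  rw [hfderiv, ← precompR_lsmul]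
  exact (hφc.hasFDerivAt_convolution_right _ hk hφ x).congr_of_eventuallyEq hconv

lemma fderiv_fderiv_convolution_left {k : E → ℝ} (hk : LocallyIntegrable k)
    (hkc : HasCompactSupport k) {U : Set E} (hU : IsOpen U) {g : E → F}
    (hg : ContDiffOn ℝ 2 g U) {x : E} (hx : ∀ y ∈ tsupport k, x - y ∈ U) :
    fderiv ℝ (fderiv ℝ (k ⋆ g)) x = (k ⋆ fderiv ℝ (fderiv ℝ g)) x := by
  have hfderiv : fderiv ℝ (k ⋆ g) =ᶠ[𝓝 x] k ⋆ fderiv ℝ g := by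
    filter_upwards [eventually_forall_sub_mem hkc hU hx] with z hz
    exact (hasFDerivAt_convolution_left hk hkc hU (hg.of_le one_le_two) hz).fderiv
  rw [hfderiv.fderiv_eq]
  exact (hasFDerivAt_convolution_left hk hkc hU
    (hg.fderiv_of_isOpen (m := 1) hU (by norm_num)) hx).fderiv

lemma traceForm_convolution {k : E → ℝ} {B : E → E →L[ℝ] E →L[ℝ] ℝ} {x : E}
    (h : ConvolutionExistsAt k B x (ContinuousLinearMap.lsmul ℝ ℝ)) :
    traceForm E ((k ⋆ B) x) = (k ⋆ fun y ↦ traceForm E (B y)) x :=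
  map_convolution (traceForm E) h

lemma laplacian_convolution_right {k : E → ℝ} (hk : LocallyIntegrable k) {g : E → ℝ}
    (hg : ContDiff ℝ 2 g) (hgc : HasCompactSupport g) : Δ (k ⋆ g) = k ⋆ Δ g := by
  have hg' : ContDiff ℝ 1 (fderiv ℝ g) := hg.fderiv_right (by norm_num)
  have hexists : ConvolutionExists k (fderiv ℝ (fderiv ℝ g)) (ContinuousLinearMap.lsmul ℝ ℝ) :=
    ((hgc.fderiv ℝ).fderiv ℝ).convolutionExists_right _ hk (hg'.continuous_fderiv one_ne_zero)
  funext x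
  rw [laplacian_eq_traceForm, fderiv_convolution_right hk (hg.of_le one_le_two) hgc,
    fderiv_convolution_right hk hg' (hgc.fderiv ℝ), traceForm_convolution (hexists x)]
  exact congrArg (fun f ↦ (k ⋆ f) x) (funext fun y ↦ (laplacian_eq_traceForm g y).symm)

lemma laplacian_convolution_left {k : E → ℝ} (hk : LocallyIntegrable k)
    (hkc : HasCompactSupport k) {g : E → ℝ} (hg : ContDiff ℝ 2 g) : Δ (k ⋆ g) = k ⋆ Δ g := by
  have hg' : ContDiff ℝ 1 (fderiv ℝ g) := hg.fderiv_right (by norm_num)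
  have hexists : ConvolutionExists k (fderiv ℝ (fderiv ℝ g)) (ContinuousLinearMap.lsmul ℝ ℝ) :=
    hkc.convolutionExists_left_of_continuous_right _ hk (hg'.continuous_fderiv one_ne_zero)
  funext x
  rw [laplacian_eq_traceForm, fderiv_fderiv_convolution_left hk hkc isOpen_univ hg.contDiffOn
    (fun _ _ ↦ Set.mem_univ _), traceForm_convolution (hexists x)]
  exact congrArg (fun f ↦ (k ⋆ f) x) (funext fun y ↦ (laplacian_eq_traceForm g y).symm)

end Convolution

section FundamentalSolution

variable {E : Type*} [NormedAddCommGroup E] [InnerProductSpace ℝ E] [FiniteDimensional ℝ E]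
  [MeasurableSpace E] [BorelSpace E]

lemma tendsto_newtonKernel_convolution (hd : 2 ≤ finrank ℝ E) {φ : E → ℝ} (hφ : Continuous φ)
    (hφc : HasCompactSupport φ) (x : E) :
    Tendsto (fun s ↦ (newtonKernel E s ⋆ φ) x) (𝓝[≥] 0) (𝓝 ((newtonKernel E 0 ⋆ φ) x)) := by
  have : Nontrivial E := nontrivial_of_finrank_pos (R := ℝ) (by lia)
  have hq : (2 - finrank ℝ E : ℝ) / 2 ≤ 0 :=
    div_nonpos_of_nonpos_of_nonneg (sub_nonpos.2 (by exact_mod_cast hd)) zero_le_two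
  have hexists := hφc.convolutionExists_right (ContinuousLinearMap.lsmul ℝ ℝ)
    locallyIntegrable_newtonKernel hφ x
  have hne : ∀ᵐ y : E, y ≠ 0 := by simp [ae_iff]
  refine tendsto_integral_filter_of_dominated_convergence _ (.of_forall fun s ↦ ?_) ?_
    hexists.norm ?_
  · unfold newtonKernel radialPow
    exact Measurable.aestronglyMeasurable (by fun_prop)
  · filter_upwards [self_mem_nhdsWithin] with s (hs : 0 ≤ s)
    filter_upwards [hne] with y hy
    have hy' : 0 < ‖y‖ ^ 2 + 0 := by positivity
    have hle : newtonKernel E s y ≤ newtonKernel E 0 y :=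
      rpow_le_rpow_of_nonpos hy' (by linarith) hq
    have hnonneg : 0 ≤ newtonKernel E s y := (radialPow_pos (by positivity)).le
    simp only [ContinuousLinearMap.lsmul_apply, norm_smul, norm_of_nonneg hnonneg,
      norm_of_nonneg (hnonneg.trans hle)]
    gcongr
  · filter_upwards [hne] with y hy
    have hcont : ContinuousAt (fun s ↦ (‖y‖ ^ 2 + s) ^ ((2 - finrank ℝ E : ℝ) / 2)) 0 :=
      ContinuousAt.rpow_const (by fun_prop) (.inl (by positivity))
    exact (hcont.tendsto.mono_left nhdsWithin_le_nhds).smul_const _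

lemma tendsto_integral_mul_comp_sub_smul {ρ f : E → ℝ} (hρ : Integrable ρ) (hf : Continuous f)
    {C : ℝ} (hC : ∀ y, ‖f y‖ ≤ C) (x : E) :
    Tendsto (fun ε : ℝ ↦ ∫ z, ρ z * f (x - ε • z)) (𝓝 0) (𝓝 ((∫ z, ρ z) * f x)) := by
  rw [← integral_mul_const]
  refine tendsto_integral_filter_of_dominated_convergence (fun z ↦ ‖ρ z‖ * C)
    (.of_forall fun ε ↦ hρ.aestronglyMeasurable.mul
      (by fun_prop : Continuous fun z ↦ f (x - ε • z)).aestronglyMeasurable)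
    (.of_forall fun ε ↦ ae_of_all _ fun z ↦ ?_) (hρ.norm.mul_const C) (ae_of_all _ fun z ↦ ?_)
  · rw [norm_mul]
    gcongr
    exact hC _
  · have hcont : Continuous fun ε : ℝ ↦ ρ z * f (x - ε • z) := by fun_prop
    simpa using hcont.tendsto 0

lemma newtonDensity_convolution_apply {ε : ℝ} (hε : 0 < ε) (f : E → ℝ) (x : E) :
    (newtonDensity E (ε ^ 2) ⋆ f) x = ∫ z, newtonDensity E 1 z * f (x - ε • z) := by
  have hscale := Measure.integral_comp_smul_of_nonneg volume
    (fun y ↦ newtonDensity E (ε ^ 2) y * f (x - y)) ε (hR := hε.le)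
  rw [eq_inv_smul_iff₀ (by positivity), ← integral_smul] at hscale
  refine hscale.symm.trans (integral_congr_ae (ae_of_all _ fun z ↦ ?_))
  simp only [newtonDensity_smul hε, smul_eq_mul]
  field_simp

lemma newtonKernel_convolution_laplacian {s : ℝ} (hs : 0 < s) {f : E → ℝ} (hf : ContDiff ℝ 2 f)
    (hfc : HasCompactSupport f) :
    newtonKernel E s ⋆ Δ f =
      -(finrank ℝ E * (finrank ℝ E - 2) : ℝ) • (newtonDensity E s ⋆ f) := by
  have hN : ContDiff ℝ 2 (newtonKernel E s) := contDiff_radialPow hs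
  have hΔ : Δ (newtonKernel E s) =
      -(finrank ℝ E * (finrank ℝ E - 2) : ℝ) • newtonDensity E s :=
    funext fun z ↦ laplacian_newtonKernel (by positivity)
  rw [← laplacian_convolution_right hN.continuous.locallyIntegrable hf hfc, convolution_comm,
    laplacian_convolution_left hf.continuous.locallyIntegrable hfc hN, hΔ, convolution_smul,
    convolution_comm]

theorem laplacian_newtonKernel_convolution (hd : 2 ≤ finrank ℝ E) {f : E → ℝ}
    (hf : ContDiff ℝ 2 f) (hfc : HasCompactSupport f) (x : E) :
    Δ (newtonKernel E 0 ⋆ f) x =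
      -(finrank ℝ E * (finrank ℝ E - 2) * ∫ z, newtonDensity E 1 z) * f x := by
  have : Nontrivial E := nontrivial_of_finrank_pos (R := ℝ) (by lia)
  obtain ⟨C, hC⟩ := hfc.exists_bound_of_continuous hf.continuous
  have hΔf : Continuous (Δ f) := (contDiff_laplacian (k := 0) (by simpa using hf)).continuous
  have hsq : Tendsto (fun ε : ℝ ↦ ε ^ 2) (𝓝[>] 0) (𝓝[≥] 0) :=
    tendsto_nhdsWithin_iff.2 ⟨((continuous_pow 2).tendsto' 0 0 (by simp)).mono_left
      nhdsWithin_le_nhds, .of_forall fun ε ↦ sq_nonneg ε⟩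
  rw [laplacian_convolution_right locallyIntegrable_newtonKernel hf hfc, neg_mul, mul_assoc,
    ← neg_mul]
  have hkernel := (tendsto_newtonKernel_convolution hd hΔf (hasCompactSupport_laplacian hfc)
    x).comp hsq
  have hdensity := (tendsto_integral_mul_comp_sub_smul integrable_newtonDensity hf.continuous hC
    x).mono_left (nhdsWithin_le_nhds (s := Set.Ioi 0))
  refine tendsto_nhds_unique hkernel ((hdensity.const_mul _).congr' ?_)
  filter_upwards [self_mem_nhdsWithin] with ε (hε : 0 < ε)
  rw [Function.comp_apply, newtonKernel_convolution_laplacian (by positivity) hf hfc,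
    Pi.smul_apply, smul_eq_mul, newtonDensity_convolution_apply hε]

end FundamentalSolution

section PosHomogeneous

lemma exists_forall_norm_add_sub_le {E F : Type*} [NormedAddCommGroup E] [NormedSpace ℝ E]
    [NormedAddCommGroup F] [NormedSpace ℝ F] {Q : E → F} {K : Set E} (hK : IsCompact K)
    (hQ : ∀ k ∈ K, ContDiffAt ℝ 1 Q k) :
    ∃ C, ∀ᶠ v in 𝓝 0, ∀ k ∈ K, ‖Q (k + v) - Q k‖ ≤ C * ‖v‖ := by
  refine hK.induction_on (p := fun S ↦ ∃ C, ∀ᶠ v in 𝓝 0, ∀ k ∈ S, ‖Q (k + v) - Q k‖ ≤ C * ‖v‖)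
    ⟨0, by simp⟩ (fun S T hST ⟨C, hC⟩ ↦ ⟨C, hC.mono fun v hv k hk ↦ hv k (hST hk)⟩) ?_ ?_
  · rintro S T ⟨C, hC⟩ ⟨C', hC'⟩
    refine ⟨max C C', ?_⟩
    filter_upwards [hC, hC'] with v hv hv'
    rintro k (hk | hk)
    · exact (hv k hk).trans (by gcongr; exact le_max_left _ _)
    · exact (hv' k hk).trans (by gcongr; exact le_max_right _ _)
  · intro k hk
    obtain ⟨C, T, hT, hC⟩ := (hQ k hk).exists_lipschitzOnWith
    have hadd : ∀ᶠ p : E × E in 𝓝 0 ×ˢ 𝓝 k, p.2 + p.1 ∈ T := by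
      rw [← nhds_prod_eq]
      exact (by fun_prop : Continuous fun p : E × E ↦ p.2 + p.1).continuousAt.eventually_mem
        (by simpa using hT)
    obtain ⟨p, hp, S, hS, hpS⟩ := eventually_prod_iff.1 hadd
    refine ⟨{y | S y} ∩ T, inter_mem (mem_nhdsWithin_of_mem_nhds hS)
      (mem_nhdsWithin_of_mem_nhds hT), C, hp.mono fun v hv y hy ↦ ?_⟩
    simpa using hC.norm_sub_le (hpS hv hy.1) hy.2

variable {E F : Type*} [NormedAddCommGroup E] [NormedSpace ℝ E]
  [NormedAddCommGroup F] [NormedSpace ℝ F] {m : ℝ} {H : E → F}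

/-- `H` is positively homogeneous of degree `m`. -/
def PosHomogeneous (m : ℝ) (H : E → F) : Prop := ∀ ⦃t : ℝ⦄, 0 < t → ∀ z, H (t • z) = t ^ m • H z

namespace PosHomogeneous

lemma fderiv (hH : PosHomogeneous m H) : PosHomogeneous (m - 1) (fderiv ℝ H) := by
  intro t ht z
  have hscale : t • _root_.fderiv ℝ H (t • z) = t ^ m • _root_.fderiv ℝ H z := by
    rw [← fderiv_comp_smul, funext fun z ↦ hH ht z]
    exact congrFun (fderiv_const_smul_field (t ^ m)) z
  rw [rpow_sub_one ht.ne', div_eq_inv_mul, mul_smul, ← hscale, inv_smul_smul₀ ht.ne']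

lemma exists_forall_norm_sub_sub_le [FiniteDimensional ℝ E] (hH : PosHomogeneous m H)
    (hc : ContDiffOn ℝ 1 H {0}ᶜ) {S : Set E} (hS : IsBounded S) :
    ∃ C, ∀ᶠ x in cobounded E, ∀ y ∈ S, ‖H (x - y) - H x‖ ≤ C * ‖x‖ ^ (m - 1) := by
  obtain ⟨C, hC⟩ := exists_forall_norm_add_sub_le (isCompact_sphere (0 : E) 1) fun e he ↦
    hc.contDiffAt (isOpen_compl_singleton.mem_nhds (by rintro rfl; simp at he))
  obtain ⟨δ, hδ, hC⟩ := Metric.eventually_nhds_iff.1 hC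
  obtain ⟨M, -, hSM⟩ := hS.exists_pos_norm_le
  refine ⟨|C| * M, ?_⟩
  filter_upwards [tendsto_norm_cobounded_atTop.eventually_gt_atTop (M / δ),
    tendsto_norm_cobounded_atTop.eventually_gt_atTop 0] with x hxδ hx y hy
  have hsmall : ‖-(‖x‖⁻¹ • y)‖ ≤ ‖x‖⁻¹ * M := by
    rw [norm_neg, norm_smul, norm_inv, norm_norm]
    gcongr
    exact hSM y hy
  have hsphere : ‖x‖⁻¹ • x ∈ Metric.sphere (0 : E) 1 := by
    simp [norm_smul, inv_mul_cancel₀ hx.ne']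
  have hscale (z : E) : H z = ‖x‖ ^ m • H (‖x‖⁻¹ • z) := by
    rw [← hH hx, smul_inv_smul₀ hx.ne']
  have hdist : dist (-(‖x‖⁻¹ • y)) 0 < δ := by
    rw [dist_zero_right]
    refine hsmall.trans_lt ?_
    rwa [inv_mul_lt_iff₀ hx, ← div_lt_iff₀ hδ]
  calc ‖H (x - y) - H x‖
      = ‖x‖ ^ m * ‖H (‖x‖⁻¹ • x + -(‖x‖⁻¹ • y)) - H (‖x‖⁻¹ • x)‖ := by
        rw [hscale (x - y), hscale x, ← smul_sub, norm_smul, norm_of_nonneg (by positivity),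
          ← sub_eq_add_neg, ← smul_sub]
    _ ≤ ‖x‖ ^ m * (|C| * (‖x‖⁻¹ * M)) := by
        gcongr
        refine (hC hdist _ hsphere).trans ?_
        gcongr
        exact le_abs_self C
    _ = |C| * M * ‖x‖ ^ (m - 1) := by
        rw [rpow_sub_one hx.ne']
        ring

lemma isBigO_rescale_sub {c : ℝ} {f : E → F} (hH : PosHomogeneous m H) (hc : c ≠ 0)
    (hf : (fun x ↦ f x - c • H x) =O[cobounded E] fun x ↦ ‖x‖ ^ (m - 1)) :
    (fun x ↦ (c * ‖x‖ ^ m)⁻¹ • f x - H (‖x‖⁻¹ • x)) =O[cobounded E] fun x ↦ ‖x‖⁻¹ := by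
  have hscale : (fun x : E ↦ (c * ‖x‖ ^ m)⁻¹) =O[cobounded E] fun x ↦ (‖x‖ ^ m)⁻¹ := by
    simpa only [mul_inv] using (isBigO_refl (fun x : E ↦ (‖x‖ ^ m)⁻¹) _).const_mul_left c⁻¹
  refine (hscale.smul hf).congr' ?_ ?_ <;>
    filter_upwards [tendsto_norm_cobounded_atTop.eventually_gt_atTop 0] with x hx
  · rw [smul_sub, hH (inv_pos.2 hx), inv_rpow hx.le, smul_smul, mul_inv, mul_right_comm,
      inv_mul_cancel₀ hc, one_mul]
  · rw [rpow_sub_one hx.ne', smul_eq_mul, mul_div, inv_mul_cancel₀ (rpow_pos_of_pos hx m).ne',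
      one_div]

end PosHomogeneous

end PosHomogeneous

section ConvolutionAsymptotics

variable {E F : Type*} [NormedAddCommGroup E] [InnerProductSpace ℝ E] [FiniteDimensional ℝ E]
  [MeasurableSpace E] [BorelSpace E] [NormedAddCommGroup F] [NormedSpace ℝ F]

theorem PosHomogeneous.convolution_sub_isBigO [CompleteSpace F] {m : ℝ} {H : E → F}
    (hH : PosHomogeneous m H) (hc : ContDiffOn ℝ 1 H {0}ᶜ) {f : E → ℝ} (hf : Continuous f)
    (hfc : HasCompactSupport f) :
    (fun x ↦ (f ⋆ H) x - (∫ y, f y) • H x) =O[cobounded E] fun x ↦ ‖x‖ ^ (m - 1) := by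
  have hbdd : IsBounded (tsupport f) := IsCompact.isBounded hfc
  obtain ⟨C, hC⟩ := hH.exists_forall_norm_sub_sub_le hc hbdd
  refine .of_bound ((∫ y, ‖f y‖) * C) ?_
  filter_upwards [hC, isBounded_def.1 hbdd] with x hx hxf
  have hne : ∀ y ∈ tsupport f, x - y ≠ 0 := by
    rintro y hy h
    exact hxf (sub_eq_zero.1 h ▸ hy)
  have hint : Integrable fun y ↦ f y • H (x - y) := by
    refine (integrableOn_iff_integrable_of_support_subset ?_).1
      (ContinuousOn.integrableOn_compact hfc ?_ (μ := volume))
    · exact (Function.support_smul_subset_left _ _).trans (subset_tsupport f)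
    · exact hf.continuousOn.smul (hc.continuousOn.comp (by fun_prop) hne)
  have hfint : Integrable f := hf.integrable_of_hasCompactSupport hfc
  have hbound (y : E) : ‖f y • H (x - y) - f y • H x‖ ≤ ‖f y‖ * (C * ‖x‖ ^ (m - 1)) := by
    by_cases hy : y ∈ tsupport f
    · rw [← smul_sub, norm_smul]
      gcongr
      exact hx y hy
    · simp [image_eq_zero_of_notMem_tsupport hy]
  have hdiff : (f ⋆ H) x - (∫ y, f y) • H x = ∫ y, (f y • H (x - y) - f y • H x) := by
    rw [integral_sub hint (hfint.smul_const _), integral_smul_const]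
    rfl
  rw [hdiff, norm_of_nonneg (by positivity : 0 ≤ ‖x‖ ^ (m - 1)), mul_assoc, ← integral_mul_const]
  exact norm_integral_le_of_norm_le (hfint.norm.mul_const _) (ae_of_all _ hbound)

end ConvolutionAsymptotics

section Expansion

variable {E F : Type*} [NormedAddCommGroup E] [InnerProductSpace ℝ E]
  [NormedAddCommGroup F] [NormedSpace ℝ F]

lemma eventually_eventually_nhds_of_cobounded {E : Type*} [SeminormedAddCommGroup E]
    {p : E → Prop} (h : ∀ᶠ x in cobounded E, p x) : ∀ᶠ x in cobounded E, ∀ᶠ y in 𝓝 x, p y := by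
  obtain ⟨R, -, hR⟩ := hasBasis_cobounded_norm.eventually_iff.1 h
  filter_upwards [tendsto_norm_cobounded_atTop.eventually_gt_atTop R] with x hx
  filter_upwards [continuous_norm.continuousAt.eventually_const_lt hx] with y hy
  exact hR hy.le

lemma posHomogeneous_newtonKernel : PosHomogeneous (2 - finrank ℝ E) (newtonKernel E 0) := by
  intro t ht z
  rw [newtonKernel_zero_apply, newtonKernel_zero_apply, norm_smul, norm_of_nonneg ht.le,
    mul_rpow ht.le (norm_nonneg z), smul_eq_mul]

lemma contDiffOn_newtonKernel {k : WithTop ℕ∞} : ContDiffOn ℝ k (newtonKernel E 0) {0}ᶜ :=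
  fun _ hz ↦ (contDiffAt_newtonKernel hz).contDiffWithinAt

variable [FiniteDimensional ℝ E]

lemma exists_contDiff_eventuallyEq_cobounded {k : ℕ∞} {u : E → F}
    (hu : ∀ᶠ x in cobounded E, ContDiffAt ℝ k u x) :
    ∃ v : E → F, ContDiff ℝ k v ∧ v =ᶠ[cobounded E] u := by
  obtain ⟨R, -, hR⟩ := hasBasis_cobounded_norm.eventually_iff.1 hu
  let χ : ContDiffBump (0 : E) :=
    ⟨|R| + 1, |R| + 2, by positivity, by linarith⟩
  refine ⟨fun x ↦ (1 - χ x) • u x, contDiff_iff_contDiffAt.2 fun x ↦ ?_, ?_⟩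
  · by_cases hx : R ≤ ‖x‖
    · exact (contDiffAt_const.sub χ.contDiffAt).smul (hR hx)
    · have hxχ : x ∈ Metric.ball 0 χ.rIn := by
        rw [mem_ball_zero_iff]
        exact (not_le.1 hx).trans_le ((le_abs_self R).trans (le_add_of_nonneg_right zero_le_one))
      refine (contDiffAt_const (c := 0)).congr_of_eventuallyEq ?_
      filter_upwards [χ.eventuallyEq_one_of_mem_ball hxχ] with y hy
      simp only [hy, Pi.one_apply, sub_self, zero_smul]
  · filter_upwards [tendsto_norm_cobounded_atTop.eventually_ge_atTop χ.rOut] with x hx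
    rw [χ.zero_of_le_dist (by rwa [dist_zero_right]), sub_zero, one_smul]

variable [MeasurableSpace E] [BorelSpace E]

lemma tendsto_convolution_newtonKernel (hd : 2 < finrank ℝ E) {f : E → ℝ} (hf : Continuous f)
    (hfc : HasCompactSupport f) : Tendsto (f ⋆ newtonKernel E 0) (cobounded E) (𝓝 0) := by
  have hG : Tendsto (newtonKernel E 0) (cobounded E) (𝓝 0) := by
    simpa only [Metric.cobounded_eq_cocompact] using tendsto_newtonKernel_cocompact hd
  have hd' : (0 : ℝ) < finrank ℝ E - 1 := sub_pos.2 (by exact_mod_cast (by lia))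
  have hdecay : Tendsto (fun x : E ↦ ‖x‖ ^ (2 - finrank ℝ E - 1 : ℝ)) (cobounded E) (𝓝 0) :=
    ((tendsto_rpow_neg_atTop hd').comp tendsto_norm_cobounded_atTop).congr fun x ↦ by
      rw [Function.comp_apply]
      ring_nf
  have herror := (posHomogeneous_newtonKernel.convolution_sub_isBigO contDiffOn_newtonKernel hf
    hfc).trans_tendsto hdecay
  simpa using herror.add (hG.const_smul (∫ y, f y))

lemma eq_convolution_newtonKernel (hd : 2 < finrank ℝ E) {v : E → ℝ} (hv : ContDiff ℝ 4 v)
    (hvc : HasCompactSupport (Δ v)) (h0 : Tendsto v (cobounded E) (𝓝 0)) :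
    v = ((-(finrank ℝ E * (finrank ℝ E - 2) * ∫ z, newtonDensity E 1 z))⁻¹ • Δ v) ⋆
      newtonKernel E 0 := by
  have : Nontrivial E := nontrivial_of_finrank_pos (R := ℝ) (by lia)
  set κ : ℝ := -(finrank ℝ E * (finrank ℝ E - 2) * ∫ z, newtonDensity E 1 z) with hκdef
  have hκ : κ ≠ 0 := by
    have hd' : (0 : ℝ) < finrank ℝ E - 2 := sub_pos.2 (by exact_mod_cast hd)
    have hint := integral_newtonDensity_pos (E := E)
    exact neg_ne_zero.2 (by positivity)
  have hf : ContDiff ℝ 2 (κ⁻¹ • Δ v) :=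
    contDiff_const.smul (contDiff_laplacian (hv.of_le (by norm_num)))
  have hfc : HasCompactSupport (κ⁻¹ • Δ v) := hvc.smul_left (f := fun _ ↦ κ⁻¹)
  have hv2 : ContDiff ℝ 2 v := hv.of_le (by norm_num)
  have hw : ContDiff ℝ 2 (newtonKernel E 0 ⋆ (κ⁻¹ • Δ v)) :=
    hfc.contDiff_convolution_right _ locallyIntegrable_newtonKernel hf
  rw [convolution_comm, ← sub_eq_zero]
  refine eq_zero_of_laplacian_eq_zero (hv2.sub hw) (fun x ↦ ?_) ?_
  · rw [hv2.contDiffAt.laplacian_sub hw.contDiffAt, laplacian_newtonKernel_convolution hd.le hf hfc,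
      ← hκdef, Pi.smul_apply, smul_eq_mul, mul_inv_cancel_left₀ hκ, sub_self]
  · have hlim := h0.sub (tendsto_convolution_newtonKernel hd hf.continuous hfc)
    rwa [sub_zero, convolution_comm, Metric.cobounded_eq_cocompact] at hlim

lemma exists_eventuallyEq_convolution_newtonKernel (hd : 2 < finrank ℝ E) {u : E → ℝ}
    (hu : ∀ᶠ x in cobounded E, ContDiffAt ℝ 4 u x) (hΔ : ∀ᶠ x in cobounded E, Δ u x = 0)
    (h0 : Tendsto u (cobounded E) (𝓝 0)) :
    ∃ f : E → ℝ, Continuous f ∧ HasCompactSupport f ∧ u =ᶠ[cobounded E] f ⋆ newtonKernel E 0 := by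
  obtain ⟨v, hv, hvu⟩ := exists_contDiff_eventuallyEq_cobounded (k := 4) hu
  have hΔv : Continuous (Δ v) := (contDiff_laplacian (k := 0) (hv.of_le (by norm_num))).continuous
  have hΔvc : HasCompactSupport (Δ v) := by
    have hzero : Δ v =ᶠ[cobounded E] 0 := by
      filter_upwards [eventually_eventually_nhds_of_cobounded hvu, hΔ] with x hx hx'
      rw [(laplacian_congr_nhds hx).self_of_nhds, hx', Pi.zero_apply]
    rw [Metric.cobounded_eq_cocompact] at hzero
    exact hasCompactSupport_iff_eventuallyEq.2 (by simpa using hzero)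
  exact ⟨_, hΔv.const_smul _, hΔvc.smul_left,
    hvu.symm.trans (.of_eq (eq_convolution_newtonKernel hd hv hΔvc (h0.congr' hvu.symm)))⟩

omit [MeasurableSpace E] [BorelSpace E] in
theorem exists_newtonKernel_expansion (hd : 2 < finrank ℝ E) {u : E → ℝ}
    (hu : ∀ᶠ x in cobounded E, ContDiffAt ℝ 4 u x) (hΔ : ∀ᶠ x in cobounded E, Δ u x = 0)
    (h0 : Tendsto u (cobounded E) (𝓝 0)) :
    ∃ c : ℝ, ((fun x ↦ u x - c • newtonKernel E 0 x) =O[cobounded E]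
        fun x ↦ ‖x‖ ^ (2 - finrank ℝ E - 1 : ℝ)) ∧
      ((fun x ↦ fderiv ℝ u x - c • fderiv ℝ (newtonKernel E 0) x) =O[cobounded E]
        fun x ↦ ‖x‖ ^ (2 - finrank ℝ E - 1 - 1 : ℝ)) ∧
      (fun x ↦ fderiv ℝ (fderiv ℝ u) x - c • fderiv ℝ (fderiv ℝ (newtonKernel E 0)) x)
        =O[cobounded E] fun x ↦ ‖x‖ ^ (2 - finrank ℝ E - 1 - 1 - 1 : ℝ) := by
  borelize E
  obtain ⟨f, hf, hfc, huf⟩ := exists_eventuallyEq_convolution_newtonKernel hd hu hΔ h0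
  have hG : PosHomogeneous (2 - finrank ℝ E) (newtonKernel E 0) := posHomogeneous_newtonKernel
  have hG0 : ContDiffOn ℝ 3 (newtonKernel E 0) {0}ᶜ := contDiffOn_newtonKernel
  have hG1 : ContDiffOn ℝ 2 (fderiv ℝ (newtonKernel E 0)) {0}ᶜ :=
    hG0.fderiv_of_isOpen isOpen_compl_singleton (by norm_num)
  have hG2 : ContDiffOn ℝ 1 (fderiv ℝ (fderiv ℝ (newtonKernel E 0))) {0}ᶜ :=
    hG1.fderiv_of_isOpen isOpen_compl_singleton (by norm_num)
  have hfar : ∀ᶠ x in cobounded E, ∀ y ∈ tsupport f, x - y ∈ ({0}ᶜ : Set E) := by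
    filter_upwards [isBounded_def.1 (IsCompact.isBounded hfc)] with x hx y hy h
    exact hx (sub_eq_zero.1 h ▸ hy)
  have hloc : LocallyIntegrable f := hf.locallyIntegrable
  have hu' := eventually_eventually_nhds_of_cobounded huf
  refine ⟨∫ y, f y, ?_, ?_, ?_⟩
  · refine (hG.convolution_sub_isBigO (hG0.of_le (by norm_num)) hf hfc).congr' ?_ .rfl
    filter_upwards [huf] with x hx
    rw [hx]
  · refine (hG.fderiv.convolution_sub_isBigO (hG1.of_le one_le_two) hf hfc).congr' ?_ .rfl
    filter_upwards [hu', hfar] with x hx hxf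
    rw [EventuallyEq.fderiv_eq hx, (hasFDerivAt_convolution_left hloc hfc isOpen_compl_singleton
      (hG0.of_le (by norm_num)) hxf).fderiv]
  · refine (hG.fderiv.fderiv.convolution_sub_isBigO hG2 hf hfc).congr' ?_ .rfl
    filter_upwards [hu', hfar] with x hx hxf
    rw [(EventuallyEq.fderiv hx).fderiv_eq, fderiv_fderiv_convolution_left hloc hfc
      isOpen_compl_singleton (hG0.of_le (by norm_num)) hxf]

end Expansion

section Barrier

variable {E : Type*} [NormedAddCommGroup E] [InnerProductSpace ℝ E] [FiniteDimensional ℝ E]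
  {u : E → ℝ} {p : E}

lemma laplacian_newtonKernel_sub {x : E} (hx : x ≠ p) :
    Δ (fun y ↦ newtonKernel E 0 (y - p)) x = 0 := by
  have hfderiv : fderiv ℝ (fun y ↦ newtonKernel E 0 (y - p)) =
      fun y ↦ fderiv ℝ (newtonKernel E 0) (y - p) := funext fun _ ↦ fderiv_comp_sub p
  rw [laplacian_eq_traceForm, hfderiv, fderiv_comp_sub, ← laplacian_eq_traceForm,
    laplacian_newtonKernel_zero (sub_ne_zero.2 hx)]

lemma mul_newtonKernel_sub_le (hd : 2 < finrank ℝ E) {Ω : Set E} (hΩ : IsOpen Ω) (hp : p ∈ Ω)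
    (hc : ContinuousOn u Ωᶜ) (hu : ∀ x ∈ (closure Ω)ᶜ, ContDiffAt ℝ 2 u x ∧ Δ u x ≤ 0)
    (h0 : Tendsto u (cocompact E) (𝓝 0)) {a : ℝ}
    (hle : ∀ x ∈ frontier Ω, a * newtonKernel E 0 (x - p) ≤ u x) {x : E} (hx : x ∈ Ωᶜ) :
    a * newtonKernel E 0 (x - p) ≤ u x := by
  have : Nontrivial E := nontrivial_of_finrank_pos (R := ℝ) (by lia)
  set w : E → ℝ := fun y ↦ newtonKernel E 0 (y - p)
  have hne : ∀ x ∈ Ωᶜ, x ≠ p := fun x hx h ↦ hx (h ▸ hp)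
  have hw : ∀ x ∈ Ωᶜ, ContDiffAt ℝ 2 w x := fun x hx ↦
    (contDiffAt_newtonKernel (sub_ne_zero.2 (hne x hx))).comp x (by fun_prop)
  have hw0 : Tendsto w (cocompact E) (𝓝 0) := (tendsto_newtonKernel_cocompact hd).comp
    (Homeomorph.subRight p).isClosedEmbedding.tendsto_cocompact
  have hdiff0 : Tendsto (u - a • w) (cocompact E) (𝓝 0) := by
    have hlim := h0.sub (hw0.const_mul a)
    rwa [mul_zero, sub_zero] at hlim
  refine sub_nonneg.1 (nonneg_of_laplacian_nonpos (h := u - a • w) hΩ.isClosed_compl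
    (hc.sub fun x hx ↦ ((hw x hx).continuousAt.const_smul a).continuousWithinAt)
    hdiff0 (fun x hx hneg ↦ ?_) hx)
  have hx' : x ∈ (closure Ω)ᶜ := fun hcl ↦
    hneg.not_ge (sub_nonneg.2 (hle x (hΩ.frontier_eq ▸ ⟨hcl, hx⟩)))
  obtain ⟨hux, hΔx⟩ := hu x hx'
  have hwx : ContDiffAt ℝ 2 (a • w) x := contDiffAt_const.smul (hw x hx)
  refine ⟨mem_of_superset (isClosed_closure.isOpen_compl.mem_nhds hx')
    (Set.compl_subset_compl.2 subset_closure), hux.sub hwx, ?_⟩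
  rwa [hux.laplacian_sub hwx, laplacian_smul _ (hw x hx), laplacian_newtonKernel_sub (hne x hx),
    smul_zero, sub_zero]

theorem exists_pos_mul_newtonKernel_sub_le (hd : 2 < finrank ℝ E) {Ω : Set E} (hΩ : IsOpen Ω)
    (hne : Ω.Nonempty) (hc : ContinuousOn u Ωᶜ)
    (hu : ∀ x ∈ (closure Ω)ᶜ, ContDiffAt ℝ 2 u x ∧ Δ u x ≤ 0)
    (h1 : ∀ x ∈ frontier Ω, 1 ≤ u x) (h0 : Tendsto u (cocompact E) (𝓝 0)) :
    ∃ a > 0, ∃ p : E, ∀ x ∈ Ωᶜ, a * newtonKernel E 0 (x - p) ≤ u x := by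
  have hd' : (2 - finrank ℝ E : ℝ) ≤ 0 := sub_nonpos.2 (by exact_mod_cast hd.le)
  obtain ⟨p, hp⟩ := hne
  obtain ⟨ρ, hρ, hball⟩ := Metric.isOpen_iff.1 hΩ p hp
  have hρpow : 0 < ρ ^ (2 - finrank ℝ E : ℝ) := rpow_pos_of_pos hρ _
  refine ⟨_, inv_pos.2 hρpow, p, fun x ↦ mul_newtonKernel_sub_le hd hΩ hp hc hu h0 fun y hy ↦ ?_⟩
  have hρy : ρ ≤ ‖y - p‖ := by
    have hyΩ : y ∉ Ω := (hΩ.frontier_eq ▸ hy).2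
    exact le_of_not_gt fun h ↦ hyΩ (hball (mem_ball_iff_norm.2 h))
  refine le_trans ?_ (h1 y hy)
  rw [inv_mul_le_one₀ hρpow, newtonKernel_zero_apply]
  exact rpow_le_rpow_of_nonpos hρ hρy hd'

lemma le_of_mul_newtonKernel_sub_le [Nontrivial E] {a c : ℝ}
    (hle : ∀ᶠ x in cobounded E, a * newtonKernel E 0 (x - p) ≤ u x)
    (hu : (fun x ↦ u x - c • newtonKernel E 0 x) =O[cobounded E]
      fun x ↦ ‖x‖ ^ (2 - finrank ℝ E - 1 : ℝ)) : a ≤ c := by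
  obtain ⟨C, hC⟩ := posHomogeneous_newtonKernel.exists_forall_norm_sub_sub_le
    contDiffOn_newtonKernel (isBounded_singleton (x := p))
  have htranslate : (fun x ↦ newtonKernel E 0 (x - p) - newtonKernel E 0 x) =O[cobounded E]
      fun x ↦ ‖x‖ ^ (2 - finrank ℝ E - 1 : ℝ) := by
    refine .of_bound C (hC.mono fun x hx ↦ ?_)
    rw [norm_of_nonneg (by positivity : 0 ≤ ‖x‖ ^ (2 - finrank ℝ E - 1 : ℝ))]
    exact hx p rfl
  obtain ⟨M, hM⟩ := (hu.sub (htranslate.const_mul_left a)).bound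
  have hlim : Tendsto (fun x : E ↦ M * ‖x‖⁻¹) (cobounded E) (𝓝 0) := by
    simpa using (tendsto_inv_atTop_zero.comp tendsto_norm_cobounded_atTop).const_mul M
  refine sub_nonpos.1 (ge_of_tendsto hlim ?_)
  filter_upwards [hle, hM, tendsto_norm_cobounded_atTop.eventually_gt_atTop 0] with x hx hMx hx0
  have hpow : 0 < ‖x‖ ^ (2 - finrank ℝ E : ℝ) := rpow_pos_of_pos hx0 _
  rw [rpow_sub_one hx0.ne', norm_of_nonneg (by positivity : 0 ≤ _ / ‖x‖), smul_eq_mul] at hMx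
  refine le_of_mul_le_mul_right ?_ hpow
  calc (a - c) * ‖x‖ ^ (2 - finrank ℝ E : ℝ)
      = (a - c) * newtonKernel E 0 x := by rw [newtonKernel_zero_apply]
    _ ≤ u x - c * newtonKernel E 0 x -
          a * (newtonKernel E 0 (x - p) - newtonKernel E 0 x) := by linarith
    _ ≤ M * (‖x‖ ^ (2 - finrank ℝ E : ℝ) / ‖x‖) := (le_abs_self _).trans hMx
    _ = M * ‖x‖⁻¹ * ‖x‖ ^ (2 - finrank ℝ E : ℝ) := by ring

end Barrier

lemma adjugate_mulVec_of_mulVec_eq_smul {ι K : Type*} [Fintype ι] [DecidableEq ι] [Field K]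
    {M : Matrix ι ι K} {v : ι → K} {μ : K} (hμ : μ ≠ 0) (h : M.mulVec v = μ • v) :
    M.adjugate.mulVec v = (M.det / μ) • v := by
  have hadj : μ • M.adjugate.mulVec v = M.det • v := by
    rw [← Matrix.mulVec_smul, ← h, Matrix.mulVec_mulVec, Matrix.adjugate_mul, Matrix.smul_mulVec,
      Matrix.one_mulVec]
  rw [div_eq_inv_mul, mul_smul, ← hadj, inv_smul_smul₀ hμ]

/-- The matrix has the eigenvector `v` with eigenvalue `a - 1`, and the eigenvalue `-1` on the
orthogonal complement of `v`. -/
lemma adjugate_smul_vecMulVec_sub_one_mulVec {ι K : Type*} [Fintype ι] [DecidableEq ι] [Field K]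
    {v : ι → K} (hv : v ⬝ᵥ v = 1) {a : K} (ha : a ≠ 1) :
    (a • Matrix.vecMulVec v v - 1).adjugate.mulVec v = (-1 : K) ^ (Fintype.card ι - 1) • v := by
  have : Nonempty ι := by
    by_contra hempty
    rw [not_nonempty_iff] at hempty
    simp [dotProduct] at hv
  have heig : (a • Matrix.vecMulVec v v - 1).mulVec v = (a - 1) • v := by
    rw [Matrix.sub_mulVec, Matrix.smul_mulVec, Matrix.vecMulVec_mulVec, hv, Matrix.one_mulVec,
      MulOpposite.op_one, one_smul, sub_smul, one_smul]
  have hdet : (a • Matrix.vecMulVec v v - 1).det = (-1) ^ (Fintype.card ι - 1) * (a - 1) := by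
    have hneg : a • Matrix.vecMulVec v v - 1 = (-1 : K) • (1 + Matrix.vecMulVec (-a • v) v) := by
      rw [Matrix.smul_vecMulVec, smul_add, smul_smul, neg_mul_neg, one_mul, neg_one_smul]
      exact sub_eq_neg_add _ _
    rw [hneg, Matrix.det_smul, Matrix.vecMulVec_eq Unit,
      Matrix.det_one_add_replicateCol_mul_replicateRow, dotProduct_smul, hv, smul_eq_mul,
      ← pow_sub_one_mul Fintype.card_ne_zero]
    ring
  rw [adjugate_mulVec_of_mulVec_eq_smul (sub_ne_zero.2 ha) heig, hdet,
    mul_div_cancel_right₀ _ (sub_ne_zero.2 ha)]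

section Smoothness

variable {ι E : Type*} [Fintype ι] [DecidableEq ι] [NormedAddCommGroup E] [NormedSpace ℝ E]
  {k : WithTop ℕ∞} {A : E → Matrix ι ι ℝ}

lemma contDiff_det (hA : ∀ i j, ContDiff ℝ k fun x ↦ A x i j) :
    ContDiff ℝ k fun x ↦ (A x).det := by
  simp only [Matrix.det_apply]
  exact ContDiff.sum fun σ _ ↦ (contDiff_prod fun i _ ↦ hA _ _).const_smul _

lemma contDiff_adjugate_apply (hA : ∀ i j, ContDiff ℝ k fun x ↦ A x i j) (i j : ι) :
    ContDiff ℝ k fun x ↦ (A x).adjugate i j := by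
  simp only [Matrix.adjugate_apply]
  refine contDiff_det fun a b ↦ ?_
  rcases eq_or_ne a j with rfl | ha
  · simp only [Matrix.updateRow_self, contDiff_const]
  · simpa only [Matrix.updateRow_ne ha] using hA a b

end Smoothness

lemma contDiffAt_norm_dual {E : Type*} [NormedAddCommGroup E] [InnerProductSpace ℝ E]
    [CompleteSpace E] {k : WithTop ℕ∞} {p : E →L[ℝ] ℝ} (hp : p ≠ 0) :
    ContDiffAt ℝ k (fun q : E →L[ℝ] ℝ ↦ ‖q‖) p := by
  have hne : (toDual ℝ E).symm p ≠ 0 := by simpa using hp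
  simpa only [Function.comp_def, LinearIsometryEquiv.norm_map] using
    (contDiffAt_norm ℝ hne).comp p (toDual ℝ E).symm.contDiff.contDiffAt

section LevelCurvature

variable {n : ℕ}

/-- The pair `(Du(x), D²u(x))` of derivatives, as continuous linear maps. -/
noncomputable def derivPair (u : Euc n → ℝ) (x : Euc n) :
    (Euc n →L[ℝ] ℝ) × (Euc n →L[ℝ] Euc n →L[ℝ] ℝ) :=
  (fderiv ℝ u x, fderiv ℝ (fderiv ℝ u) x)

/-- The Gaussian curvature of a level set as a function of the derivatives `w = (Du, D²u)` of its
defining function. -/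
noncomputable def levelCurvature (w : (Euc n →L[ℝ] ℝ) × (Euc n →L[ℝ] Euc n →L[ℝ] ℝ)) : ℝ :=
  (-1) ^ (n - 1) * ‖w.1‖ ^ (-((n : ℝ) + 1)) *
    ∑ α, ∑ β, (Matrix.of fun i j ↦ w.2 (ebasis n i) (ebasis n j)).adjugate α β *
      w.1 (ebasis n α) * w.1 (ebasis n β)

lemma gaussK_eq_levelCurvature (u : Euc n → ℝ) (x : Euc n) :
    gaussK n u x = levelCurvature (derivPair u x) := by
  have hHess : hessMat n u x =
      Matrix.of fun i j ↦ fderiv ℝ (fderiv ℝ u) x (ebasis n i) (ebasis n j) := by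
    ext i j
    simp [hessMat, iteratedFDeriv_two_apply]
  rw [gaussK, hHess, levelCurvature, derivPair]

lemma contDiffAt_levelCurvature {k : WithTop ℕ∞}
    {w : (Euc n →L[ℝ] ℝ) × (Euc n →L[ℝ] Euc n →L[ℝ] ℝ)} (hw : w.1 ≠ 0) :
    ContDiffAt ℝ k levelCurvature w := by
  have hgrad (i : Fin n) : ContDiff ℝ k
      fun w : (Euc n →L[ℝ] ℝ) × (Euc n →L[ℝ] Euc n →L[ℝ] ℝ) ↦ w.1 (ebasis n i) := by fun_prop
  have hhess (i j : Fin n) : ContDiff ℝ k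
      fun w : (Euc n →L[ℝ] ℝ) × (Euc n →L[ℝ] Euc n →L[ℝ] ℝ) ↦
        (Matrix.of fun i j ↦ w.2 (ebasis n i) (ebasis n j)).adjugate i j :=
    contDiff_adjugate_apply (fun i j ↦ by simp only [Matrix.of_apply]; fun_prop) i j
  have hnorm := ((contDiffAt_norm_dual (k := k) hw).comp w contDiffAt_fst).rpow_const_of_ne
    (p := -((n : ℝ) + 1)) (norm_ne_zero_iff.2 hw)
  exact (contDiffAt_const.mul hnorm).mul (ContDiff.sum fun α _ ↦ ContDiff.sum fun β _ ↦
    ((hhess α β).mul (hgrad α)).mul (hgrad β)).contDiffAt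

lemma levelCurvature_smul_smul (hn : 1 ≤ n) {s t : ℝ} (hs : 0 < s)
    (p : Euc n →L[ℝ] ℝ) (B : Euc n →L[ℝ] Euc n →L[ℝ] ℝ) :
    levelCurvature (s • p, t • B) = (t / s) ^ (n - 1) * levelCurvature (p, B) := by
  have hpow : s ^ (-((n : ℝ) + 1)) * s ^ 2 = (s ^ (n - 1))⁻¹ := by
    rw [← rpow_natCast, ← rpow_natCast, ← rpow_neg hs.le, ← rpow_add hs]
    push_cast [Nat.cast_sub hn]
    ring_nf
  have hmat : (Matrix.of fun i j ↦ (t • B) (ebasis n i) (ebasis n j)) =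
      t • Matrix.of fun i j ↦ B (ebasis n i) (ebasis n j) := rfl
  simp only [levelCurvature]
  rw [hmat, Matrix.adjugate_smul, Fintype.card_fin, norm_smul, norm_of_nonneg hs.le,
    mul_rpow hs.le (norm_nonneg p), div_pow, div_eq_mul_inv, ← hpow]
  simp only [Matrix.smul_apply, smul_apply, smul_eq_mul, Finset.mul_sum]
  exact Finset.sum_congr rfl fun α _ ↦ Finset.sum_congr rfl fun β _ ↦ by ring

lemma inner_ebasis_right (e : Euc n) (i : Fin n) : inner ℝ e (ebasis n i) = e i := by
  simp [ebasis, EuclideanSpace.inner_single_right]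

lemma ebasis_apply (i j : Fin n) : ebasis n i j = (1 : Matrix (Fin n) (Fin n) ℝ) i j := by
  rw [ebasis, PiLp.single_apply, Matrix.one_apply]
  simp only [eq_comm]

lemma levelCurvature_eq_one (hn : 2 ≤ n) {e : Euc n} (he : ‖e‖ = 1) {p : Euc n →L[ℝ] ℝ}
    {B : Euc n →L[ℝ] Euc n →L[ℝ] ℝ} (hp : ∀ a, p a = -inner ℝ e a)
    (hB : ∀ a b, B a b = n * inner ℝ e a * inner ℝ e b - inner ℝ a b) :
    levelCurvature (p, B) = 1 := by
  set M : Matrix (Fin n) (Fin n) ℝ := Matrix.of fun i j ↦ B (ebasis n i) (ebasis n j) with hM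
  have hM' : M = (n : ℝ) • Matrix.vecMulVec (e : Fin n → ℝ) e - 1 := by
    ext i j
    simp only [hM, Matrix.of_apply, hB, inner_ebasis_right, ebasis_apply, Matrix.smul_apply,
      Matrix.sub_apply, Matrix.vecMulVec_apply, smul_eq_mul, mul_assoc]
  have hsum : ∑ i, e i * e i = 1 := by
    simpa [he, sq] using (EuclideanSpace.real_norm_sq_eq e).symm
  have hn1 : (n : ℝ) ≠ 1 := by exact_mod_cast (by lia : n ≠ 1)
  have hadj (α : Fin n) : ∑ β, M.adjugate α β * e β = (-1) ^ (n - 1) * e α := by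
    have heig := congrFun (adjugate_smul_vecMulVec_sub_one_mulVec hsum hn1) α
    rwa [← hM', Fintype.card_fin] at heig
  have hnorm : ‖p‖ = 1 := by
    have : p = -toDual ℝ (Euc n) e := by ext a; simp [hp]
    rw [this, norm_neg, LinearIsometryEquiv.norm_map, he]
  calc levelCurvature (p, B)
      = (-1) ^ (n - 1) * ∑ α, (∑ β, M.adjugate α β * e β) * e α := by
        simp only [levelCurvature, ← hM, hnorm, one_rpow, mul_one, hp, inner_ebasis_right,
          Finset.sum_mul]
        congr! 3
        ring
    _ = ((-1) ^ (n - 1) * (-1) ^ (n - 1)) * ∑ α, e α * e α := by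
        simp only [hadj, Finset.mul_sum, mul_assoc]
    _ = 1 := by rw [hsum, ← mul_pow]; simp

end LevelCurvature

section CurvatureAsymptotics

variable {n : ℕ}

lemma fderiv_newtonKernel_apply {e : Euc n} (he : ‖e‖ = 1) (a : Euc n) :
    fderiv ℝ (newtonKernel (Euc n) 0) e a = (2 - n) * inner ℝ e a := by
  have hpos : 0 < ‖e‖ ^ 2 + 0 := by simp [he]
  rw [newtonKernel, (hasFDerivAt_radialPow hpos).fderiv, smul_apply, radialPow_zero_eq_norm_rpow,
    he, one_rpow, mul_one, mul_div_cancel₀ _ two_ne_zero, smul_eq_mul, finrank_euclideanSpace_fin]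
  rfl

lemma fderiv_fderiv_newtonKernel_apply {e : Euc n} (he : ‖e‖ = 1) (a b : Euc n) :
    fderiv ℝ (fderiv ℝ (newtonKernel (Euc n) 0)) e a b =
      (2 - n) * (inner ℝ a b - n * inner ℝ e a * inner ℝ e b) := by
  have hpos : 0 < ‖e‖ ^ 2 + 0 := by simp [he]
  rw [newtonKernel, fderiv_fderiv_radialPow_apply hpos, finrank_euclideanSpace_fin]
  simp only [radialPow_zero_eq_norm_rpow, he, one_rpow]
  ring

lemma levelCurvature_newtonKernel (hn : 3 ≤ n) {e : Euc n} (he : ‖e‖ = 1) :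
    levelCurvature (derivPair (newtonKernel (Euc n) 0) e) = 1 := by
  have hs : (0 : ℝ) < n - 2 := sub_pos.2 (by exact_mod_cast hn)
  rw [derivPair, ← smul_inv_smul₀ hs.ne' (fderiv ℝ (newtonKernel (Euc n) 0) e),
    ← smul_inv_smul₀ hs.ne' (fderiv ℝ (fderiv ℝ (newtonKernel (Euc n) 0)) e),
    levelCurvature_smul_smul (by lia) hs, div_self hs.ne', one_pow, one_mul]
  refine levelCurvature_eq_one (by lia) he (fun a ↦ ?_) fun a b ↦ ?_
  · rw [smul_apply, fderiv_newtonKernel_apply he, smul_eq_mul]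
    field_simp
    ring
  · rw [smul_apply, smul_apply, fderiv_fderiv_newtonKernel_apply he, smul_eq_mul]
    field_simp
    ring

lemma derivPair_newtonKernel_fst_ne_zero (hn : 3 ≤ n) {e : Euc n} (he : ‖e‖ = 1) :
    (derivPair (newtonKernel (Euc n) 0) e).1 ≠ 0 := by
  intro h
  have hn' : (3 : ℝ) ≤ n := by exact_mod_cast hn
  have happly := DFunLike.congr_fun h e
  rw [derivPair, fderiv_newtonKernel_apply he, real_inner_self_eq_norm_sq, he, zero_apply]
    at happly
  linarith

lemma continuousOn_derivPair_newtonKernel :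
    ContinuousOn (derivPair (newtonKernel (Euc n) 0)) {0}ᶜ := by
  have hG : ContDiffOn ℝ 2 (newtonKernel (Euc n) 0) {0}ᶜ := contDiffOn_newtonKernel
  have hG' : ContDiffOn ℝ 1 (fderiv ℝ (newtonKernel (Euc n) 0)) {0}ᶜ :=
    hG.fderiv_of_isOpen isOpen_compl_singleton (by norm_num)
  exact hG'.continuousOn.prodMk
    (hG'.continuousOn_fderiv_of_isOpen isOpen_compl_singleton le_rfl)

/-- The derivatives `(Du, D²u)`, divided by `c |x|^m` and `c |x|^(m-1)` respectively. -/
noncomputable def rescaledDerivPair (c m : ℝ) (u : Euc n → ℝ) (x : Euc n) :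
    (Euc n →L[ℝ] ℝ) × (Euc n →L[ℝ] Euc n →L[ℝ] ℝ) :=
  ((c * ‖x‖ ^ m)⁻¹ • (derivPair u x).1, (c * ‖x‖ ^ (m - 1))⁻¹ • (derivPair u x).2)

lemma gaussK_eq_levelCurvature_rescaledDerivPair (hn : 1 ≤ n) {c : ℝ} (hc : 0 < c) (m : ℝ)
    (u : Euc n → ℝ) {x : Euc n} (hx : 0 < ‖x‖) :
    gaussK n u x = ‖x‖ ^ (1 - (n : ℝ)) * levelCurvature (rescaledDerivPair c m u x) := by
  have hs : 0 < c * ‖x‖ ^ m := by positivity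
  have ht : 0 < c * ‖x‖ ^ (m - 1) := by positivity
  have hratio : (c * ‖x‖ ^ (m - 1) / (c * ‖x‖ ^ m)) ^ (n - 1) = ‖x‖ ^ (1 - (n : ℝ)) := by
    rw [mul_div_mul_left _ _ hc.ne', ← rpow_sub hx, ← rpow_mul_natCast hx.le, Nat.cast_sub hn]
    ring_nf
  rw [gaussK_eq_levelCurvature, ← hratio, rescaledDerivPair, ← levelCurvature_smul_smul hn hs,
    smul_inv_smul₀ hs.ne', smul_inv_smul₀ ht.ne']

lemma exists_levelCurvature_sub_one_le (hn : 3 ≤ n) :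
    ∃ C, ∀ᶠ v in 𝓝 0, ∀ e : Euc n, ‖e‖ = 1 →
      ‖levelCurvature (derivPair (newtonKernel (Euc n) 0) e + v) - 1‖ ≤ C * ‖v‖ := by
  have hsphere (e : Euc n) (he : e ∈ Metric.sphere 0 1) : ‖e‖ = 1 := by simpa using he
  have hcont : ContinuousOn (derivPair (newtonKernel (Euc n) 0)) (Metric.sphere 0 1) :=
    continuousOn_derivPair_newtonKernel.mono fun e he ↦ by
      rintro rfl
      simp at he
  have hK := (isCompact_sphere 0 1).image_of_continuousOn hcont
  obtain ⟨C, hC⟩ := exists_forall_norm_add_sub_le (Q := levelCurvature) hK (by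
    rintro _ ⟨e, he, rfl⟩
    exact contDiffAt_levelCurvature (derivPair_newtonKernel_fst_ne_zero hn (hsphere e he)))
  refine ⟨C, hC.mono fun v hv e he ↦ ?_⟩
  simpa only [levelCurvature_newtonKernel hn he] using hv _ ⟨e, by simpa using he, rfl⟩

/-- The rescaled derivatives converge at rate `|x|⁻¹` to those of the Newtonian kernel on the unit
sphere, where the curvature is `1`. -/
lemma isBigO_gaussK_sub (hn : 3 ≤ n) {u : Euc n → ℝ} {c : ℝ} (hc : 0 < c)
    (h1 : (fun x ↦ fderiv ℝ u x - c • fderiv ℝ (newtonKernel (Euc n) 0) x) =O[cobounded (Euc n)]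
      fun x ↦ ‖x‖ ^ (2 - finrank ℝ (Euc n) - 1 - 1 : ℝ))
    (h2 : (fun x ↦ fderiv ℝ (fderiv ℝ u) x - c • fderiv ℝ (fderiv ℝ (newtonKernel (Euc n) 0)) x)
      =O[cobounded (Euc n)] fun x ↦ ‖x‖ ^ (2 - finrank ℝ (Euc n) - 1 - 1 - 1 : ℝ)) :
    (fun x ↦ gaussK n u x - ‖x‖ ^ (1 - (n : ℝ))) =O[cobounded (Euc n)]
      fun x ↦ ‖x‖ ^ (-(n : ℝ)) := by
  set w := rescaledDerivPair c (2 - finrank ℝ (Euc n) - 1) u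
  set J := derivPair (newtonKernel (Euc n) 0)
  have hwJ : (fun x ↦ w x - J (‖x‖⁻¹ • x)) =O[cobounded (Euc n)] fun x ↦ ‖x‖⁻¹ :=
    (posHomogeneous_newtonKernel.fderiv.isBigO_rescale_sub hc.ne' h1).prod_left
      (posHomogeneous_newtonKernel.fderiv.fderiv.isBigO_rescale_sub hc.ne' h2)
  have hinv : Tendsto (fun x : Euc n ↦ ‖x‖⁻¹) (cobounded (Euc n)) (𝓝 0) :=
    tendsto_inv_atTop_zero.comp tendsto_norm_cobounded_atTop
  have hnorm := tendsto_norm_cobounded_atTop (E := Euc n) |>.eventually_gt_atTop 0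
  have hK : (fun x ↦ levelCurvature (w x) - 1) =O[cobounded (Euc n)]
      fun x ↦ w x - J (‖x‖⁻¹ • x) := by
    obtain ⟨C, hC⟩ := exists_levelCurvature_sub_one_le hn
    refine .of_bound C ?_
    filter_upwards [(hwJ.trans_tendsto hinv).eventually hC, hnorm] with x hx hx0
    simpa only [J, add_sub_cancel] using
      hx (‖x‖⁻¹ • x) (by rw [norm_smul, norm_inv, norm_norm, inv_mul_cancel₀ hx0.ne'])
  have hpow := isBigO_refl (fun x : Euc n ↦ ‖x‖ ^ (1 - (n : ℝ))) (cobounded (Euc n))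
  refine (hpow.mul (hK.trans hwJ)).congr' ?_ ?_ <;>
    filter_upwards [hnorm] with x hx
  · rw [gaussK_eq_levelCurvature_rescaledDerivPair (by lia) hc _ u hx, mul_sub_one]
  · rw [← rpow_neg_one, ← rpow_add hx]
    ring_nf

end CurvatureAsymptotics

section ExteriorProblem

variable {n : ℕ} {Ω : Set (Euc n)} {u : Euc n → ℝ}

lemma laplacian_eq_lapl (u : Euc n → ℝ) (x : Euc n) : Δ u x = lapl n u x := by
  rw [laplacian_eq_iteratedFDeriv_orthonormalBasis u (EuclideanSpace.basisFun (Fin n) ℝ)]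
  simp [lapl, hessMat, ebasis]

lemma SmoothOnNhd.contDiffAt {S : Set (Euc n)} (hu : SmoothOnNhd n u S) {x : Euc n} (hx : x ∈ S) :
    ContDiffAt ℝ (⊤ : ℕ∞) u x := by
  obtain ⟨U, hU, hSU, hc⟩ := hu
  exact hc.contDiffAt (hU.mem_nhds (hSU hx))

namespace HarmExtSol

lemma contDiffAt (hu : HarmExtSol n Ω u) {x : Euc n} (hx : x ∈ Ωᶜ) {k : ℕ} :
    ContDiffAt ℝ k u x :=
  (hu.1.contDiffAt hx).of_le (by exact_mod_cast le_top)

lemma laplacian_eq_zero (hu : HarmExtSol n Ω u) {x : Euc n} (hx : x ∈ (closure Ω)ᶜ) :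
    Δ u x = 0 := by
  rw [laplacian_eq_lapl, hu.2.1 x hx]

lemma exists_pos_newtonKernel_expansion (hn : 3 ≤ n) (ho : IsOpen Ω) (hb : IsBounded Ω)
    (hne : Ω.Nonempty) (hu : HarmExtSol n Ω u) :
    ∃ c : ℝ, 0 < c ∧
      ((fun x ↦ fderiv ℝ u x - c • fderiv ℝ (newtonKernel (Euc n) 0) x) =O[cobounded (Euc n)]
        fun x ↦ ‖x‖ ^ (2 - finrank ℝ (Euc n) - 1 - 1 : ℝ)) ∧
      (fun x ↦ fderiv ℝ (fderiv ℝ u) x - c • fderiv ℝ (fderiv ℝ (newtonKernel (Euc n) 0)) x)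
        =O[cobounded (Euc n)] fun x ↦ ‖x‖ ^ (2 - finrank ℝ (Euc n) - 1 - 1 - 1 : ℝ) := by
  have hd : 2 < finrank ℝ (Euc n) := by rwa [finrank_euclideanSpace_fin]
  have : Nontrivial (Euc n) := nontrivial_of_finrank_pos (R := ℝ) (two_pos.trans hd)
  have hext : ∀ᶠ x in cobounded (Euc n), x ∈ (closure Ω)ᶜ := isBounded_def.1 hb.closure
  have hsub : (closure Ω)ᶜ ⊆ Ωᶜ := Set.compl_subset_compl.2 subset_closure
  have hu0 : Tendsto u (cobounded (Euc n)) (𝓝 0) := by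
    rw [Metric.cobounded_eq_cocompact]
    exact hu.2.2.2
  obtain ⟨c, hc0, hc⟩ := exists_newtonKernel_expansion hd
    (hext.mono fun x hx ↦ hu.contDiffAt (k := 4) (hsub hx))
    (hext.mono fun x hx ↦ hu.laplacian_eq_zero hx) hu0
  obtain ⟨a, ha, p, hap⟩ := exists_pos_mul_newtonKernel_sub_le hd ho hne
    (fun x hx ↦ (hu.contDiffAt (k := 0) hx).continuousAt.continuousWithinAt)
    (fun x hx ↦ ⟨hu.contDiffAt (hsub hx), (hu.laplacian_eq_zero hx).le⟩)
    (fun x hx ↦ (hu.2.2.1 x hx).ge) hu.2.2.2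
  have hac : a ≤ c := le_of_mul_newtonKernel_sub_le (hext.mono fun x hx ↦ hap x (hsub hx)) hc0
  exact ⟨c, ha.trans_le hac, hc⟩

end HarmExtSol

lemma exists_bound_of_isBigO_cobounded {E : Type*} [NormedAddCommGroup E] {f g : E → ℝ}
    (h : f =O[cobounded E] g) :
    ∃ C ρ : ℝ, 0 < C ∧ 0 < ρ ∧ ∀ x, ρ ≤ ‖x‖ → |f x| ≤ C * |g x| := by
  obtain ⟨C, hC, hfg⟩ := h.exists_pos
  obtain ⟨ρ, -, hρ⟩ := hasBasis_cobounded_norm.eventually_iff.1 hfg.bound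
  exact ⟨C, max ρ 1, hC, by positivity, fun x hx ↦ hρ ((le_max_left _ _).trans hx)⟩

end ExteriorProblem

end

theorem statement18_general (n : ℕ) (hn : 3 ≤ n) (Ω : Set (Euc n)) (ho : IsOpen Ω)
    (hb : Bornology.IsBounded Ω) (hne : Ω.Nonempty) (u : Euc n → ℝ) (hu : HarmExtSol n Ω u) :
    ∃ C ρ₀ : ℝ, 0 < C ∧ 0 < ρ₀ ∧
      ∀ x : Euc n, ρ₀ ≤ ‖x‖ →
        |gaussK n u x - ‖x‖ ^ (1 - (n : ℝ))| ≤ C * ‖x‖ ^ (-(n : ℝ)) := by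
  obtain ⟨c, hc, h1, h2⟩ := hu.exists_pos_newtonKernel_expansion hn ho hb hne
  obtain ⟨C, ρ₀, hC, hρ₀, h⟩ := exists_bound_of_isBigO_cobounded (isBigO_gaussK_sub hn hc h1 h2)
  refine ⟨C, ρ₀, hC, hρ₀, fun x hx ↦ (h x hx).trans_eq ?_⟩
  rw [abs_of_nonneg (by positivity)]

/-- Lemma 5.2: asymptotics of the Gaussian curvature of the level sets:
`K(x) = |x|^{1-n} + O(|x|^{-n})` as `|x| → ∞`. -/
theorem statement18 (n : ℕ) (hn : 3 ≤ n) (Ω : Set (Euc n))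
    (hΩ : SmoothStrictConvexDomain n Ω)
    (u : Euc n → ℝ) (hu : HarmExtSol n Ω u)
    (hgrad : ∀ x ∈ Ωᶜ, fderiv ℝ u x ≠ 0) :
    ∃ C ρ₀ : ℝ, 0 < C ∧ 0 < ρ₀ ∧
      ∀ x : Euc n, ρ₀ ≤ ‖x‖ →
        |gaussK n u x - ‖x‖ ^ (1 - (n : ℝ))| ≤ C * ‖x‖ ^ (-(n : ℝ)) :=
  statement18_general n hn Ω hΩ.1 hΩ.2.1 hΩ.2.2.1 u hu
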